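/- arXiv:1104.2755 — 6 statements merged into one kernel-verified Lean document; each statement's English description precedes it below -/
import Mathlib

section
/- Let X be a path-connected topological space and let A ⊆ X × X be a nonempty subspace. Then the following are equivalent: (1) TC_X(A) = 1; (2) the two projections p₁, p₂ : A → X (restrictions of the coordinate projections of X × X) are homotopic; (3) the inclusion A ↪ X × X is homotopic to a map taking values in the diagonal Δ(X) = {(x,x) : x ∈ X} ⊆ X × X. -/
open Set

/-- A continuous local section of the free path fibration `π : C([0,1],X) → X × X`,
`π(γ) = (γ 0, γ 1)`, over a subset `S ⊆ X × X`. -/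
def PathSecOn (X : Type*) [TopologicalSpace X] (S : Set (X × X)) : Prop :=
  ∃ s : C(S, C(unitInterval, X)),
    ∀ p : S, (s p) 0 = (p : X × X).1 ∧ (s p) 1 = (p : X × X).2

/-- Subspace topological complexity `TC_X(A)` for `A ⊆ X × X`, valued in `ℕ∞`:
the least `k` such that `A` is covered by `k` sets open in `A`, each admitting a
continuous local section of the free path fibration. -/
noncomputable def subTC (X : Type*) [TopologicalSpace X] (A : Set (X × X)) : ℕ∞ :=
  sInf {n : ℕ∞ | ∃ k : ℕ, n = k ∧ ∃ U : Fin k → Set (X × X),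
    (∀ i, ∃ V, IsOpen V ∧ U i = V ∩ A) ∧ (A ⊆ ⋃ i, U i) ∧ ∀ i, PathSecOn X (U i)}

/-- Topological complexity `TC(X) = TC_X(X × X)`. -/
noncomputable def TopComplexity (X : Type*) [TopologicalSpace X] : ℕ∞ :=
  subTC X Set.univ

/-- Subspace Lusternik–Schnirelmann category `cat_X(B)` for `B ⊆ X`, valued in `ℕ∞`:
the least `k` such that `B` is covered by `k` sets open in `B`, each of whose
inclusions into `X` is null-homotopic. -/
noncomputable def subCat (X : Type*) [TopologicalSpace X] (B : Set X) : ℕ∞ :=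
  sInf {n : ℕ∞ | ∃ k : ℕ, n = k ∧ ∃ U : Fin k → Set X,
    (∀ i, ∃ V, IsOpen V ∧ U i = V ∩ B) ∧ (B ⊆ ⋃ i, U i) ∧
    ∀ i, ∃ x₀ : X, ContinuousMap.Homotopic
      (⟨fun u : U i => (u : X), continuous_subtype_val⟩ : C(U i, X))
      (ContinuousMap.const _ x₀)}

/-- Lusternik–Schnirelmann category `cat(X) = cat_X(X)`. -/
noncomputable def LSCat (X : Type*) [TopologicalSpace X] : ℕ∞ :=
  subCat X Set.univ

/-- `TC_X(A) = 1` iff there is a global section over `A`. -/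
theorem subTC_eq_one_iff_pathSecOn {X : Type*} [TopologicalSpace X]
    (A : Set (X × X)) (hA : A.Nonempty) : subTC X A = 1 ↔ PathSecOn X A := by
  constructor
  · intro h
    have hne : {n : ℕ∞ | ∃ k : ℕ, n = k ∧ ∃ U : Fin k → Set (X × X),
        (∀ i, ∃ V, IsOpen V ∧ U i = V ∩ A) ∧ (A ⊆ ⋃ i, U i) ∧
          ∀ i, PathSecOn X (U i)}.Nonempty := by
      by_contra hne
      rw [Set.not_nonempty_iff_eq_empty] at hne
      unfold subTC at h
      rw [hne, sInf_empty] at h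
      exact absurd h (by simp)
    have hmem := csInf_mem hne
    change subTC X A ∈ _ at hmem
    rw [h] at hmem
    obtain ⟨k, hk, U, hU, hcov, hsec⟩ := hmem
    have hk1 : k = 1 := by exact_mod_cast hk.symm
    subst hk1
    have hUA : U 0 = A := by
      apply Set.Subset.antisymm
      · obtain ⟨V, -, hV⟩ := hU 0
        rw [hV]
        exact Set.inter_subset_right
      · intro a ha
        obtain ⟨i, hi⟩ := Set.mem_iUnion.1 (hcov ha)
        rwa [Subsingleton.elim i 0] at hi
    rw [← hUA]
    exact hsec 0
  · intro h
    apply le_antisymm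
    · apply sInf_le
      exact ⟨1, by simp, fun _ => A, fun _ => ⟨Set.univ, isOpen_univ, by simp⟩,
        fun a ha => Set.mem_iUnion.2 ⟨0, ha⟩, fun _ => h⟩
    · apply le_sInf
      rintro n ⟨k, rfl, U, -, hcov, -⟩
      obtain ⟨a, ha⟩ := hA
      obtain ⟨i, -⟩ := Set.mem_iUnion.1 (hcov ha)
      have : 1 ≤ k := by have := i.2; omega
      exact_mod_cast this

/-- A global section over `A` is the same as a homotopy between the projections. -/
theorem pathSecOn_iff_homotopic {X : Type*} [TopologicalSpace X] (A : Set (X × X)) :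
    PathSecOn X A ↔ ContinuousMap.Homotopic
        (⟨fun a : A => (a : X × X).1, continuous_fst.comp continuous_subtype_val⟩ : C(A, X))
        (⟨fun a : A => (a : X × X).2, continuous_snd.comp continuous_subtype_val⟩ : C(A, X)) := by
  constructor
  · rintro ⟨s, hs⟩
    refine ⟨⟨⟨fun p => s p.2 p.1, ?_⟩, fun a => (hs a).1, fun a => (hs a).2⟩⟩
    exact (ContinuousMap.continuous_uncurry_of_continuous s).comp continuous_swap
  · rintro ⟨H⟩
    refine ⟨(H.toContinuousMap.comp ContinuousMap.prodSwap).curry, fun p => ⟨?_, ?_⟩⟩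
    · exact H.map_zero_left p
    · exact H.map_one_left p

/-- Farber's lemma: for a nonempty subspace `A ⊆ X × X` of the square of a path-connected
space `X`, the following are equivalent: (1) `TC_X(A) = 1`; (2) the two coordinate
projections `A → X` are homotopic; (3) the inclusion `A ↪ X × X` is homotopic to a map
with values in the diagonal. -/
theorem subTC_eq_one_iff {X : Type*} [TopologicalSpace X] [PathConnectedSpace X]
    (A : Set (X × X)) (hA : A.Nonempty) :
    (subTC X A = 1 ↔
      ContinuousMap.Homotopic
        (⟨fun a : A => (a : X × X).1, continuous_fst.comp continuous_subtype_val⟩ : C(A, X))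
        (⟨fun a : A => (a : X × X).2, continuous_snd.comp continuous_subtype_val⟩ : C(A, X))) ∧
    (subTC X A = 1 ↔
      ∃ f : C(A, X × X), (∀ a, f a ∈ Set.diagonal X) ∧
        ContinuousMap.Homotopic
          (⟨fun a : A => (a : X × X), continuous_subtype_val⟩ : C(A, X × X)) f) := by
  refine ⟨(subTC_eq_one_iff_pathSecOn A hA).trans (pathSecOn_iff_homotopic A),
    ((subTC_eq_one_iff_pathSecOn A hA).trans (pathSecOn_iff_homotopic A)).trans ?_⟩
  constructor
  · intro h
    exact ⟨ContinuousMap.prodMk ⟨fun a : A => (a : X × X).1, by fun_prop⟩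
      ⟨fun a : A => (a : X × X).1, by fun_prop⟩, fun a => rfl,
      (ContinuousMap.Homotopic.refl
        (⟨fun a : A => (a : X × X).1, by fun_prop⟩ : C(A, X))).prodMk h.symm⟩
  · rintro ⟨f, hf, h⟩
    have h1 := (ContinuousMap.Homotopic.refl (ContinuousMap.fst : C(X × X, X))).comp h
    have h2 := (ContinuousMap.Homotopic.refl (ContinuousMap.snd : C(X × X, X))).comp h
    have e : (ContinuousMap.fst : C(X × X, X)).comp f = ContinuousMap.snd.comp f := by
      ext a
      exact hf a
    rw [e] at h1
    exact h1.trans h2.symm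
end

section
/- Let X be a path-connected normal topological space which is an ENR, and let A ⊆ X × X be a closed subspace with TC_X(A) ≤ n. Then there exist open sets W₁, …, W_n in X × X such that A ⊆ W₁ ∪ ⋯ ∪ W_n and the free path fibration π : C([0,1],X) → X × X admits a continuous local section on each W_i. -/
open Set

/-- `X` is an ENR: it embeds in some `ℝ^N` as a retract of an open set. -/
def IsENR (X : Type*) [TopologicalSpace X] : Prop :=
  ∃ (N : ℕ) (e : X → (Fin N → ℝ)) (O : Set (Fin N → ℝ)) (r : C(O, Fin N → ℝ)),
    Topology.IsEmbedding e ∧ IsOpen O ∧ Set.range e ⊆ O ∧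
    (∀ z : O, r z ∈ Set.range e) ∧ (∀ z : O, (z : Fin N → ℝ) ∈ Set.range e → r z = (z : Fin N → ℝ))

/-- A path section over a relatively closed subset of an open set `V` extends to an open set. -/
theorem extend_pathSec {X : Type*} [TopologicalSpace X] (hX : IsENR X)
    (A : Set (X × X)) (hA : IsClosed A) (V : Set (X × X)) (hV : IsOpen V)
    (hs : PathSecOn X (V ∩ A)) :
    ∃ W : Set (X × X), IsOpen W ∧ V ∩ A ⊆ W ∧ PathSecOn X W := by
  obtain ⟨N, e, O, r, he, hO, heO, hr, hr'⟩ := hX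
  obtain ⟨s, hs⟩ := hs
  haveI : TopologicalSpace.MetrizableSpace X := he.metrizableSpace
  have hec : Continuous e := he.continuous
  let j : ↥(V ∩ A) × unitInterval → ↥V × unitInterval :=
    Prod.map (Set.inclusion Set.inter_subset_left) id
  have hj : Topology.IsClosedEmbedding j := by
    refine Topology.IsClosedEmbedding.prodMap ?_ Topology.IsClosedEmbedding.id
    refine ⟨Topology.IsEmbedding.inclusion _, ?_⟩
    rw [Set.range_inclusion]
    have : {x : V | (x : X × X) ∈ V ∩ A} = (Subtype.val : V → X × X) ⁻¹' A := by
      ext x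
      simp [x.2]
    rw [this]
    exact hA.preimage continuous_subtype_val
  let f : C(↥(V ∩ A) × unitInterval, Fin N → ℝ) :=
    ⟨fun q => e (s q.1 q.2), by fun_prop⟩
  obtain ⟨H, hH⟩ := ContinuousMap.exists_extension hj f
  have hH' : ∀ (p : X × X) (hp : p ∈ V ∩ A) (t : unitInterval),
      H (⟨p, hp.1⟩, t) = e (s ⟨p, hp⟩ t) := by
    intro p hp t
    have h := DFunLike.congr_fun hH ((⟨p, hp⟩ : ↥(V ∩ A)), t)
    exact h
  let G : ↥V × unitInterval → (Fin N → ℝ) := fun q =>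
    H q + (1 - (q.2 : ℝ)) • (e (q.1 : X × X).1 - H (q.1, 0))
      + (q.2 : ℝ) • (e (q.1 : X × X).2 - H (q.1, 1))
  have hG : Continuous G := by
    simp only [G]
    fun_prop
  have hG0 : ∀ p : V, G (p, 0) = e (p : X × X).1 := by
    intro p
    simp [G]
  have hG1 : ∀ p : V, G (p, 1) = e (p : X × X).2 := by
    intro p
    simp [G]
  have hGU : ∀ (p : X × X) (hp : p ∈ V ∩ A) (t : unitInterval),
      G (⟨p, hp.1⟩, t) = e (s ⟨p, hp⟩ t) := by
    intro p hp t
    simp [G, hH' p hp, (hs ⟨p, hp⟩).1, (hs ⟨p, hp⟩).2]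
  let W' : Set V := {p | ∀ t : unitInterval, G (p, t) ∈ O}
  have hW' : IsOpen W' := by
    have hc : IsClosed (Prod.fst '' (G ⁻¹' O)ᶜ) :=
      isClosedMap_fst_of_compactSpace _ (hO.preimage hG).isClosed_compl
    convert hc.isOpen_compl using 1
    ext p
    simp [W']
  refine ⟨Subtype.val '' W', hV.isOpenMap_subtype_val _ hW', ?_, ?_⟩
  · intro p hp
    refine ⟨⟨p, hp.1⟩, fun t => ?_, rfl⟩
    rw [hGU p hp t]
    exact heO ⟨_, rfl⟩
  · have hWV : ∀ p : ↥((Subtype.val : V → X × X) '' W'), (p : X × X) ∈ V := by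
      rintro ⟨_, q, -, rfl⟩
      exact q.2
    have hWO : ∀ (p : ↥((Subtype.val : V → X × X) '' W')) (t : unitInterval),
        G (⟨p, hWV p⟩, t) ∈ O := by
      rintro ⟨_, q, hq, rfl⟩ t
      exact hq t
    choose g hg using hr
    have hgc : Continuous g := by
      rw [he.continuous_iff]
      have : e ∘ g = r := funext hg
      rw [this]
      exact r.continuous
    have hgx : ∀ (z : O) (x : X), (z : Fin N → ℝ) = e x → g z = x := by
      intro z x hz
      apply he.injective
      rw [hg, hr' z ⟨x, hz.symm⟩, hz]
    let F : C(↥((Subtype.val : V → X × X) '' W') × unitInterval, X) :=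
      ⟨fun q => g ⟨G (⟨q.1, hWV q.1⟩, q.2), hWO q.1 q.2⟩, by
        refine hgc.comp (Continuous.subtype_mk (hG.comp ?_) _)
        exact ((continuous_subtype_val.comp continuous_fst).subtype_mk _).prodMk continuous_snd⟩
    exact ⟨F.curry, fun p => ⟨hgx _ _ (hG0 _), hgx _ _ (hG1 _)⟩⟩

/-- If `X` is a path-connected normal ENR and `A ⊆ X × X` is closed with `TC_X(A) ≤ n`,
then there are `n` open subsets of `X × X` covering `A`, each admitting a continuous
local section of the free path fibration. -/
theorem exists_open_cover_of_closed_subTC_le {X : Type*} [TopologicalSpace X]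
    [PathConnectedSpace X] [NormalSpace X] (hX : IsENR X)
    (A : Set (X × X)) (hA : IsClosed A) (n : ℕ) (hTC : subTC X A ≤ (n : ℕ∞)) :
    ∃ W : Fin n → Set (X × X),
      (∀ i, IsOpen (W i)) ∧ A ⊆ ⋃ i, W i ∧ ∀ i, PathSecOn X (W i) := by
  have hne : {n : ℕ∞ | ∃ k : ℕ, n = k ∧ ∃ U : Fin k → Set (X × X),
      (∀ i, ∃ V, IsOpen V ∧ U i = V ∩ A) ∧ (A ⊆ ⋃ i, U i) ∧
        ∀ i, PathSecOn X (U i)}.Nonempty := by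
    by_contra h
    rw [Set.not_nonempty_iff_eq_empty] at h
    rw [subTC, h, sInf_empty] at hTC
    exact absurd hTC (by simp)
  obtain ⟨k, hk, U, hU, hAU, hsec⟩ := csInf_mem hne
  have hkn : k ≤ n := by
    have : (k : ℕ∞) ≤ n := hk ▸ hTC
    exact_mod_cast this
  have key : ∀ i, ∃ W : Set (X × X), IsOpen W ∧ U i ⊆ W ∧ PathSecOn X W := by
    intro i
    obtain ⟨V, hV, hUV⟩ := hU i
    have h := hsec i
    rw [hUV] at h ⊢
    exact extend_pathSec hX A hA V hV h
  choose W hWo hUW hWs using key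
  have hempty : PathSecOn X (∅ : Set (X × X)) :=
    ⟨⟨fun p => p.2.elim, continuous_of_const fun p => p.2.elim⟩, fun p => p.2.elim⟩
  refine ⟨fun i => if h : (i : ℕ) < k then W ⟨i, h⟩ else ∅, ?_, ?_, ?_⟩
  · intro i
    dsimp only
    split_ifs with h
    · exact hWo _
    · exact isOpen_empty
  · intro p hp
    obtain ⟨i, hi⟩ := Set.mem_iUnion.1 (hAU hp)
    refine Set.mem_iUnion.2 ⟨⟨i, i.2.trans_le hkn⟩, ?_⟩
    simpa using hUW i hi
  · intro i
    dsimp only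
    split_ifs with h
    · exact hWs _
    · exact hempty
end

section
/- Let p : X̃ → X be a covering map with X̃ path-connected. Then TC(X̃) ≤ cat(X × X). -/
open Set

theorem pathFamily_of_discrete {V E : Type*} [TopologicalSpace V] [TopologicalSpace E]
    [PathConnectedSpace E] (S T : Set E) [DiscreteTopology S] [DiscreteTopology T]
    (e : V → S) (f : V → T) (he : Continuous e) (hf : Continuous f) :
    ∃ γ : ∀ v, Path (e v : E) (f v : E), Continuous ↿γ := by
  let P : ∀ st : S × T, Path (st.1 : E) (st.2 : E) := fun st => PathConnectedSpace.somePath _ _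
  refine ⟨fun v => P (e v, f v), ?_⟩
  have h : Continuous (fun q : (S × T) × unitInterval => P q.1 q.2) :=
    continuous_prod_of_discrete_left.2 fun st => (P st).continuous
  exact h.comp (((he.comp continuous_fst).prodMk (hf.comp continuous_fst)).prodMk continuous_snd)

/-- Lifting a null-homotopy of `p ∘ f`: a family of paths ending in the fibre. -/
theorem liftFamily {V E X : Type*} [TopologicalSpace V] [TopologicalSpace E] [TopologicalSpace X]
    {p : E → X} (hp : IsCoveringMap p) (f : C(V, E)) (a : X) (H : C(unitInterval × V, X))
    (h0 : ∀ v, H (0, v) = p (f v)) (h1 : ∀ v, H (1, v) = a) :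
    ∃ e : V → p ⁻¹' {a}, Continuous e ∧ ∃ γ : ∀ v, Path (f v) (e v : E), Continuous ↿γ := by
  let L := hp.liftHomotopy H f h0
  have hL : ∀ q, p (L q) = H q := fun q => congrFun (hp.liftHomotopy_lifts H f h0) q
  refine ⟨fun v => ⟨L (1, v), by simp [hL, h1]⟩, ?_, fun v =>
    ⟨⟨fun t => L (t, v), by fun_prop⟩, hp.liftHomotopy_zero H f h0 v, rfl⟩, ?_⟩
  · exact Continuous.subtype_mk (by fun_prop) _
  · change Continuous fun q : V × unitInterval => L (q.2, q.1)
    fun_prop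

/-- If `p : X̃ → X` is a covering map with `X̃` path-connected, then
`TC(X̃) ≤ cat(X × X)`. -/
theorem topComplexity_le_lsCat_sq_of_coveringMap {X' X : Type*} [TopologicalSpace X']
    [TopologicalSpace X] [PathConnectedSpace X'] (p : X' → X)
    (hp : IsCoveringMap p) (hsurj : Function.Surjective p) :
    TopComplexity X' ≤ LSCat (X × X) := by
  refine le_sInf ?_
  rintro n ⟨k, rfl, U, hU, hcov, hnull⟩
  have hpp : Continuous (Prod.map p p) := hp.continuous.prodMap hp.continuous
  refine sInf_le ⟨k, rfl, fun i => Prod.map p p ⁻¹' U i, fun i => ?_, fun q _ => ?_, fun i => ?_⟩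
  · obtain ⟨V, hV, h⟩ := hU i
    exact ⟨_, hV.preimage hpp, by simp [h]⟩
  · obtain ⟨i, hi⟩ := mem_iUnion.1 (hcov (mem_univ (Prod.map p p q)))
    exact mem_iUnion.2 ⟨i, hi⟩
  · obtain ⟨⟨a, b⟩, ⟨H⟩⟩ := hnull i
    let V := Prod.map p p ⁻¹' U i
    let r : C(V, U i) := ⟨fun v => ⟨Prod.map p p v, v.2⟩,
      (hpp.comp continuous_subtype_val).subtype_mk _⟩
    let K : C(unitInterval × V, X × X) := ⟨fun q => H (q.1, r q.2), by fun_prop⟩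
    have K0 : ∀ v, K (0, v) = Prod.map p p v := fun v => H.apply_zero (r v)
    have K1 : ∀ v, K (1, v) = (a, b) := fun v => H.apply_one (r v)
    obtain ⟨e, he, γ, hγ⟩ := liftFamily hp (V := V) ⟨fun v => v.1.1, by fun_prop⟩ a
      ⟨fun q => (K q).1, by fun_prop⟩ (fun v => congrArg Prod.fst (K0 v))
      (fun v => congrArg Prod.fst (K1 v))
    obtain ⟨f, hf, δ, hδ⟩ := liftFamily hp (V := V) ⟨fun v => v.1.2, by fun_prop⟩ b
      ⟨fun q => (K q).2, by fun_prop⟩ (fun v => congrArg Prod.snd (K0 v))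
      (fun v => congrArg Prod.snd (K1 v))
    have := (hp a).discreteTopology_fiber
    have := (hp b).discreteTopology_fiber
    obtain ⟨ε, hε⟩ := pathFamily_of_discrete _ _ e f he hf
    have hc := Path.trans_continuous_family _ (Path.trans_continuous_family _ hγ _ hε) _
      (Path.symm_continuous_family _ hδ)
    let G : C(V × unitInterval, X') := ⟨_, hc⟩
    refine ⟨G.curry, fun v => ⟨?_, ?_⟩⟩
    · exact (((γ v).trans (ε v)).trans (δ v).symm).source
    · exact (((γ v).trans (ε v)).trans (δ v).symm).target
end

section
/- Let X be a path-connected normal ENR, let Y be a paracompact space with covering dimension dim(Y) ≤ k, and let q : X × X → Y be a closed continuous map such that TC_X(q⁻¹(y)) ≤ n for each y ∈ Y. Then TC(X) ≤ (k + 1) · n. -/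
open Set

/-- `Y` has covering dimension at most `k`: every open cover of `Y` admits an open
refinement covering `Y` in which every point lies in at most `k + 1` members. -/
def CovDimLE (Y : Type*) [TopologicalSpace Y] (k : ℕ) : Prop :=
  ∀ 𝒰 : Set (Set Y), (∀ U ∈ 𝒰, IsOpen U) → ⋃₀ 𝒰 = Set.univ →
    ∃ 𝒱 : Set (Set Y), (∀ V ∈ 𝒱, IsOpen V) ∧ ⋃₀ 𝒱 = Set.univ ∧
      (∀ V ∈ 𝒱, ∃ U ∈ 𝒰, V ⊆ U) ∧
      ∀ y : Y, {V ∈ 𝒱 | y ∈ V}.Finite ∧ {V ∈ 𝒱 | y ∈ V}.ncard ≤ k + 1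

theorem pathSecOn_iff {X : Type*} [TopologicalSpace X] [Nonempty X] (S : Set (X × X)) :
    PathSecOn X S ↔ ∃ s : X × X → C(unitInterval, X), ContinuousOn s S ∧
      ∀ p ∈ S, (s p) 0 = p.1 ∧ (s p) 1 = p.2 := by
  classical
  constructor
  · rintro ⟨s, hs⟩
    obtain ⟨x₀⟩ := ‹Nonempty X›
    refine ⟨fun p => if h : p ∈ S then s ⟨p, h⟩ else ContinuousMap.const _ x₀, ?_, ?_⟩
    · rw [continuousOn_iff_continuous_restrict]
      convert! s.continuous using 1
      funext p
      simp [Set.restrict]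
    · intro p hp
      simpa [hp] using! hs ⟨p, hp⟩
  · rintro ⟨s, hc, hs⟩
    exact ⟨⟨S.restrict s, hc.restrict⟩, fun p => hs p p.2⟩

theorem PathSecOn.mono {X : Type*} [TopologicalSpace X] [Nonempty X] {S T : Set (X × X)}
    (h : PathSecOn X T) (hST : S ⊆ T) : PathSecOn X S := by
  rw [pathSecOn_iff] at h ⊢
  obtain ⟨s, hc, hs⟩ := h
  exact ⟨s, hc.mono hST, fun p hp => hs p (hST hp)⟩

/-- Sections over pairwise disjoint open sets glue. -/
theorem PathSecOn.iUnion {X : Type*} [TopologicalSpace X] [Nonempty X] {ι : Type*}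
    (B : ι → Set (X × X)) (ho : ∀ i, IsOpen (B i))
    (hd : ∀ i j p, p ∈ B i → p ∈ B j → i = j)
    (h : ∀ i, PathSecOn X (B i)) : PathSecOn X (⋃ i, B i) := by
  classical
  simp only [pathSecOn_iff] at h ⊢
  choose s hc hs using h
  obtain ⟨x₀⟩ := ‹Nonempty X›
  let t : X × X → C(unitInterval, X) := fun p =>
    if h : ∃ i, p ∈ B i then s h.choose p else ContinuousMap.const _ x₀
  have key : ∀ i p, p ∈ B i → t p = s i p := by
    intro i p hp
    have h : ∃ i, p ∈ B i := ⟨i, hp⟩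
    have : h.choose = i := hd _ _ p h.choose_spec hp
    simp only [t, dif_pos h, this]
  refine ⟨t, ?_, ?_⟩
  · intro p hp
    obtain ⟨i, hi⟩ := Set.mem_iUnion.1 hp
    have h1 : ContinuousAt (s i) p := (hc i).continuousAt ((ho i).mem_nhds hi)
    refine ContinuousAt.continuousWithinAt (h1.congr ?_)
    filter_upwards [(ho i).mem_nhds hi] with z hz
    exact (key i z hz).symm
  · intro p hp
    obtain ⟨i, hi⟩ := Set.mem_iUnion.1 hp
    rw [key i p hi]
    exact hs i p hi

theorem IsENR.metrizable {X : Type*} [TopologicalSpace X] (hX : IsENR X) :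
    TopologicalSpace.MetrizableSpace X := by
  obtain ⟨N, e, O, r, he, -⟩ := hX
  exact he.metrizableSpace

/-- Sections over a locally closed set extend to an open neighbourhood. -/
theorem PathSecOn.exists_open {X : Type*} [TopologicalSpace X] (hX : IsENR X)
    (V A : Set (X × X)) (hV : IsOpen V) (hA : IsClosed A) (h : PathSecOn X (V ∩ A)) :
    ∃ W, IsOpen W ∧ V ∩ A ⊆ W ∧ PathSecOn X W := by
  have := hX.metrizable
  obtain ⟨N, e, O, r, he, hO, heO, hr, hre⟩ := hX
  obtain ⟨s, hs⟩ := h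
  let C : Set (V × unitInterval) := {z | (z.1 : X × X) ∈ A}
  have hC : IsClosed C := hA.preimage (continuous_subtype_val.comp continuous_fst)
  have hscont : Continuous fun z : ↥(V ∩ A) × unitInterval => s z.1 z.2 :=
    ContinuousMap.continuous_uncurry_of_continuous s
  let f : C(C, Fin N → ℝ) :=
    ⟨fun z => e (s ⟨z.1.1, z.1.1.2, z.2⟩ z.1.2), by
      refine he.continuous.comp ?_
      refine hscont.comp (f := fun z : C => ((⟨z.1.1, z.1.1.2, z.2⟩ : ↥(V ∩ A)), z.1.2)) ?_
      refine Continuous.prodMk (Continuous.subtype_mk ?_ _) ?_ <;> fun_prop⟩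
  obtain ⟨g, hg⟩ := f.exists_restrict_eq hC
  have hgf : ∀ (p : X × X) (hpV : p ∈ V) (hpA : p ∈ A) (t : unitInterval),
      g (⟨p, hpV⟩, t) = e (s ⟨p, hpV, hpA⟩ t) := fun p hpV hpA t =>
    DFunLike.congr_fun hg (⟨(⟨p, hpV⟩, t), hpA⟩ : C)
  have hec := he.continuous
  let F : C(V × unitInterval, Fin N → ℝ) :=
    ⟨fun z => g z + (1 - (z.2 : ℝ)) • (e z.1.1.1 - g (z.1, 0)) +
      (z.2 : ℝ) • (e z.1.1.2 - g (z.1, 1)), by fun_prop⟩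
  have hF0 : ∀ p : V, F (p, 0) = e p.1.1 := by intro p; simp [F]
  have hF1 : ∀ p : V, F (p, 1) = e p.1.2 := by intro p; simp [F]
  have hFs : ∀ (p : X × X) (hpV : p ∈ V) (hpA : p ∈ A) (t : unitInterval),
      F (⟨p, hpV⟩, t) = e (s ⟨p, hpV, hpA⟩ t) := by
    intro p hpV hpA t
    have := hs ⟨p, hpV, hpA⟩
    simp [F, hgf p hpV hpA, this.1, this.2]
  let W0 : Set V := {p | Set.MapsTo (F.curry p) Set.univ O}
  have hW' : IsOpen W0 :=
    (ContinuousMap.isOpen_setOfPred_mapsTo isCompact_univ hO).preimage F.curry.continuous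
  have hmem : ∀ p ∈ W0, ∀ t, F (p, t) ∈ O := fun p hp t => hp (Set.mem_univ t)
  refine ⟨Subtype.val '' W0, hV.isOpenMap_subtype_val _ hW', ?_, ?_⟩
  · rintro p ⟨hpV, hpA⟩
    refine ⟨⟨p, hpV⟩, ?_, rfl⟩
    intro t _
    change F (⟨p, hpV⟩, t) ∈ O
    rw [hFs p hpV hpA]
    exact heO ⟨_, rfl⟩
  · have hWV : ∀ p : ↥(Subtype.val '' W0), p.1 ∈ V := by
      rintro ⟨_, p, hp, rfl⟩; exact p.2
    have hWO : ∀ z : ↥(Subtype.val '' W0) × unitInterval, F (⟨z.1.1, hWV z.1⟩, z.2) ∈ O := by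
      rintro ⟨⟨_, p, hp, rfl⟩, t⟩
      exact hmem p hp t
    let R : ↥(Subtype.val '' W0) × unitInterval → (Fin N → ℝ) := fun z => r ⟨_, hWO z⟩
    have hRc : Continuous R := by
      refine r.continuous.comp (Continuous.subtype_mk (F.continuous.comp ?_) _)
      refine Continuous.prodMk (Continuous.subtype_mk ?_ _) ?_ <;> fun_prop
    choose G hG using fun z : ↥(Subtype.val '' W0) × unitInterval => hr ⟨_, hWO z⟩
    have hGc : Continuous G := by
      rw [he.isInducing.continuous_iff]
      convert! hRc using 1
      funext z
      exact hG z
    let G' : C(↥(Subtype.val '' W0) × unitInterval, X) := ⟨G, hGc⟩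
    refine ⟨G'.curry, fun p => ⟨?_, ?_⟩⟩
    · apply he.injective
      change e (G (p, 0)) = _
      rw [hG, hre]
      · exact hF0 ⟨p.1, hWV p⟩
      · exact ⟨_, (hF0 ⟨p.1, hWV p⟩).symm⟩
    · apply he.injective
      change e (G (p, 1)) = _
      rw [hG, hre]
      · exact hF1 ⟨p.1, hWV p⟩
      · exact ⟨_, (hF1 ⟨p.1, hWV p⟩).symm⟩

theorem exists_of_subTC_le {X : Type*} [TopologicalSpace X] (A : Set (X × X)) (n : ℕ)
    (h : subTC X A ≤ n) : ∃ U : Fin n → Set (X × X),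
    (∀ i, ∃ V, IsOpen V ∧ U i = V ∩ A) ∧ (A ⊆ ⋃ i, U i) ∧ ∀ i, PathSecOn X (U i) := by
  unfold subTC at h
  set T : Set ℕ∞ := {n : ℕ∞ | ∃ k : ℕ, n = k ∧ ∃ U : Fin k → Set (X × X),
    (∀ i, ∃ V, IsOpen V ∧ U i = V ∩ A) ∧ (A ⊆ ⋃ i, U i) ∧ ∀ i, PathSecOn X (U i)} with hT
  have hne : T.Nonempty := by
    by_contra hne
    rw [Set.not_nonempty_iff_eq_empty] at hne
    rw [hne, sInf_empty] at h
    exact absurd h (by simp)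
  obtain ⟨m, hm, U, h1, h2, h3⟩ := csInf_mem hne
  rw [hm] at h
  have hmn : m ≤ n := by exact_mod_cast h
  refine ⟨fun i => if hi : i.1 < m then U ⟨i, hi⟩ else ∅, ?_, ?_, ?_⟩
  · intro i
    by_cases hi : i.1 < m
    · simpa [hi] using h1 ⟨i, hi⟩
    · exact ⟨∅, isOpen_empty, by simp [hi]⟩
  · intro p hp
    obtain ⟨i, hi⟩ := Set.mem_iUnion.1 (h2 hp)
    refine Set.mem_iUnion.2 ⟨⟨i, i.2.trans_le hmn⟩, ?_⟩
    simpa using hi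
  · intro i
    by_cases hi : i.1 < m
    · simpa [hi] using h3 ⟨i, hi⟩
    · simp only [hi, dif_neg, not_false_eq_true]
      exact ⟨⟨fun p => absurd p.2 (Set.notMem_empty _),
        continuous_of_const fun p => absurd p.2 (Set.notMem_empty _)⟩,
        fun p => absurd p.2 (Set.notMem_empty _)⟩

/-- The Milnor sets associated with a partition of unity. -/
def milnorSet {M ι : Type*} [TopologicalSpace M] (f : PartitionOfUnity ι M) (S : Finset ι) :
    Set M :=
  {p | ∀ v ∈ S, 0 < f v p ∧ ∀ w, w ∉ S → f w p < f v p}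

theorem isOpen_milnorSet {M ι : Type*} [TopologicalSpace M] (f : PartitionOfUnity ι M)
    (S : Finset ι) : IsOpen (milnorSet f S) := by
  classical
  rw [isOpen_iff_mem_nhds]
  intro p hp
  obtain ⟨t, ht, hfin⟩ := f.locallyFinite p
  have h1 : ∀ᶠ z in nhds p, ∀ v ∈ S, 0 < f v z := by
    rw [Filter.eventually_all_finset]
    intro v hv
    exact continuousAt_const.eventually_lt (f v).continuous.continuousAt (hp v hv).1
  have h2 : ∀ᶠ z in nhds p, ∀ v ∈ S, ∀ w ∈ hfin.toFinset, w ∉ S → f w z < f v z := by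
    rw [Filter.eventually_all_finset]
    intro v hv
    rw [Filter.eventually_all_finset]
    intro w _
    by_cases hw : w ∈ S
    · exact Filter.Eventually.of_forall fun z h => absurd hw h
    · filter_upwards [(f w).continuous.continuousAt.eventually_lt
        (f v).continuous.continuousAt ((hp v hv).2 w hw)] with z hz _
      exact hz
  filter_upwards [h1, h2, ht] with z hz1 hz2 hzt
  intro v hv
  refine ⟨hz1 v hv, fun w hw => ?_⟩
  by_cases hwz : f w z = 0
  · rw [hwz]; exact hz1 v hv
  · exact hz2 v hv w (by simpa using ⟨z, hwz, hzt⟩) hw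

theorem milnorSet_disjoint {M ι : Type*} [TopologicalSpace M] (f : PartitionOfUnity ι M)
    (S T : Finset ι) (hc : S.card = T.card) (p : M) (hS : p ∈ milnorSet f S)
    (hT : p ∈ milnorSet f T) : S = T := by
  by_contra hne
  have h1 : ¬ S ⊆ T := fun h => hne (Finset.eq_of_subset_of_card_le h hc.ge)
  have h2 : ¬ T ⊆ S := fun h => hne (Finset.eq_of_subset_of_card_le h hc.le).symm
  obtain ⟨v, hv, hv'⟩ := Finset.not_subset.1 h1
  obtain ⟨w, hw, hw'⟩ := Finset.not_subset.1 h2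
  exact lt_asymm ((hS v hv).2 w hw') ((hT w hw).2 v hv')

/-- If `X` is a path-connected normal ENR, `Y` is paracompact of covering dimension at
most `k`, and `q : X × X → Y` is a closed continuous map all of whose fibres satisfy
`TC_X(q⁻¹(y)) ≤ n`, then `TC(X) ≤ (k + 1) · n`. -/
theorem topComplexity_le_of_closed_map {X Y : Type*} [TopologicalSpace X]
    [TopologicalSpace Y] [PathConnectedSpace X] [NormalSpace X] (hX : IsENR X)
    [ParacompactSpace Y] (k : ℕ) (hY : CovDimLE Y k)
    (q : X × X → Y) (hqcont : Continuous q) (hqclosed : IsClosedMap q)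
    (n : ℕ) (hfib : ∀ y : Y, subTC X (q ⁻¹' {y}) ≤ (n : ℕ∞)) :
    TopComplexity X ≤ (((k + 1) * n : ℕ) : ℕ∞) := by
  classical
  have hmet := hX.metrizable
  -- extend the local sections over fibres
  have hfibcl : ∀ y, IsClosed (q ⁻¹' {y}) := by
    intro y
    by_cases hy : ∃ p, q p = y
    · obtain ⟨p, rfl⟩ := hy
      have := hqclosed {p} isClosed_singleton
      rw [Set.image_singleton] at this
      exact this.preimage hqcont
    · have : q ⁻¹' {y} = ∅ := by
        ext p
        simpa using fun h => hy ⟨p, h⟩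
      rw [this]
      exact isClosed_empty
  have hloc : ∀ y, ∃ W : Fin n → Set (X × X), (∀ i, IsOpen (W i)) ∧
      (q ⁻¹' {y} ⊆ ⋃ i, W i) ∧ ∀ i, PathSecOn X (W i) := by
    intro y
    obtain ⟨U, h1, h2, h3⟩ := exists_of_subTC_le _ n (hfib y)
    choose V hV hUV using h1
    have h4 : ∀ i, ∃ W, IsOpen W ∧ V i ∩ q ⁻¹' {y} ⊆ W ∧ PathSecOn X W := fun i =>
      PathSecOn.exists_open hX (V i) _ (hV i) (hfibcl y) (hUV i ▸ h3 i)
    choose W hW1 hW2 hW3 using h4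
    refine ⟨W, hW1, h2.trans (Set.iUnion_mono fun i => ?_), hW3⟩
    rw [hUV i]
    exact hW2 i
  choose W hWo hWc hWs using hloc
  have hN : ∀ y, ∃ N : Set Y, IsOpen N ∧ y ∈ N ∧ q ⁻¹' N ⊆ ⋃ i, W y i := by
    intro y
    refine ⟨(q '' (⋃ i, W y i)ᶜ)ᶜ, ?_, ?_, ?_⟩
    · exact (hqclosed _ (isOpen_iUnion (hWo y)).isClosed_compl).isOpen_compl
    · rintro ⟨p, hp, hpy⟩
      exact hp (hWc y hpy)
    · intro p hp
      by_contra hpn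
      exact hp ⟨p, hpn, rfl⟩
  choose N hNo hNy hNW using hN
  obtain ⟨𝒱, hVo, hVc, hVr, hVf⟩ := hY (Set.range N) (by rintro _ ⟨y, rfl⟩; exact hNo y)
    (Set.eq_univ_of_forall fun y => ⟨N y, ⟨y, rfl⟩, hNy y⟩)
  have hVr' : ∀ V : 𝒱, ∃ y, (V : Set Y) ⊆ N y := by
    intro V
    obtain ⟨_, ⟨y, rfl⟩, h⟩ := hVr V V.2
    exact ⟨y, h⟩
  choose c hc using hVr'
  letI := TopologicalSpace.metrizableSpaceMetric (X × X)
  obtain ⟨f, hf⟩ := PartitionOfUnity.exists_isSubordinate (s := (Set.univ : Set (X × X)))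
    isClosed_univ (fun V : 𝒱 => q ⁻¹' (V : Set Y)) (fun V => (hVo V V.2).preimage hqcont) (by
      intro p _
      have : q p ∈ ⋃₀ 𝒱 := hVc ▸ Set.mem_univ _
      obtain ⟨V, hV, hpV⟩ := this
      exact Set.mem_iUnion.2 ⟨⟨V, hV⟩, hpV⟩)
  have hfV : ∀ (V : 𝒱) p, f V p ≠ 0 → q p ∈ (V : Set Y) := fun V p h =>
    hf V (subset_tsupport _ h)
  -- the sets of the final cover
  let B : Fin (k + 1) → Fin n → {S : Finset 𝒱 // S.Nonempty} → Set (X × X) := fun j l S =>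
    {p | S.1.card = j + 1 ∧ p ∈ milnorSet f S.1 ∩ W (c S.2.choose) l}
  have hBo : ∀ j l S, IsOpen (B j l S) := by
    intro j l S
    by_cases h : S.1.card = j + 1
    · have : B j l S = milnorSet f S.1 ∩ W (c S.2.choose) l := by
        ext p; simp [B, h]
      rw [this]
      exact (isOpen_milnorSet f _).inter (hWo _ _)
    · have : B j l S = ∅ := by
        ext p; simp [B, h]
      rw [this]
      exact isOpen_empty
  have hBs : ∀ j l, PathSecOn X (⋃ S, B j l S) := by
    intro j l
    refine PathSecOn.iUnion _ (hBo j l) ?_ ?_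
    · intro S T p hS hT
      exact Subtype.ext (milnorSet_disjoint f _ _ (hS.1.trans hT.1.symm) p hS.2.1 hT.2.1)
    · intro S
      exact (hWs (c S.2.choose) l).mono fun p hp => hp.2.2
  have hBc : ∀ p, ∃ j l, p ∈ ⋃ S, B j l S := by
    intro p
    have hmemS : ∀ V, V ∈ f.finsupport p ↔ f V p ≠ 0 := by
      intro V
      rw [f.mem_finsupport]; rfl
    have hSne : (f.finsupport p).Nonempty := by
      rw [Finset.nonempty_iff_ne_empty]
      intro h
      have := f.sum_finsupport (Set.mem_univ p)
      rw [h] at this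
      simp at this
    have hcard : (f.finsupport p).card ≤ k + 1 := by
      obtain ⟨hfin, hle⟩ := hVf (q p)
      refine le_trans ?_ hle
      rw [← Finset.card_map (Function.Embedding.subtype _), ← Set.ncard_coe_finset]
      refine Set.ncard_le_ncard ?_ hfin
      intro V hV
      rw [Finset.mem_coe, Finset.mem_map] at hV
      obtain ⟨V', hV', rfl⟩ := hV
      exact ⟨V'.2, hfV V' p ((hmemS V').1 hV')⟩
    have hpos := hSne.card_pos
    have hq : p ∈ ⋃ l, W (c hSne.choose) l :=
      hNW _ (hc _ (hfV _ p ((hmemS _).1 hSne.choose_spec)))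
    obtain ⟨l, hl⟩ := Set.mem_iUnion.1 hq
    refine ⟨⟨(f.finsupport p).card - 1, by omega⟩, l,
      Set.mem_iUnion.2 ⟨⟨f.finsupport p, hSne⟩, ?_, ?_, hl⟩⟩
    · show (f.finsupport p).card = (f.finsupport p).card - 1 + 1
      omega
    · intro V hV
      have hVpos : 0 < f V p := lt_of_le_of_ne (f.nonneg V p) ((hmemS V).1 hV).symm
      refine ⟨hVpos, fun w hw => ?_⟩
      have : f w p = 0 := by
        by_contra h
        exact hw ((hmemS w).2 h)
      rw [this]
      exact hVpos
  refine sInf_le ⟨(k + 1) * n, rfl, fun i => ⋃ S, B (finProdFinEquiv.symm i).1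
    (finProdFinEquiv.symm i).2 S, ?_, ?_, fun i => hBs _ _⟩
  · intro i
    exact ⟨_, isOpen_iUnion fun S => hBo _ _ S, (Set.inter_univ _).symm⟩
  · intro p _
    obtain ⟨j, l, h⟩ := hBc p
    refine Set.mem_iUnion.2 ⟨finProdFinEquiv (j, l), ?_⟩
    simpa using h
end

section
/- Let X be a path-connected normal ENR, let Y be a paracompact space with covering dimension dim(Y) ≤ k, and let q : X × X → Y be a closed continuous map such that every fibre q⁻¹(y) has covering dimension at most m. Then TC(X) ≤ (k + 1)(m + 1). -/
open Set

theorem PathSecOn.mono_set {X : Type*} [TopologicalSpace X] {S T : Set (X × X)}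
    (h : PathSecOn X T) (hST : S ⊆ T) : PathSecOn X S := by
  obtain ⟨s, hs⟩ := h
  exact ⟨⟨fun p => s ⟨p, hST p.2⟩, by fun_prop⟩, fun p => hs ⟨p, hST p.2⟩⟩

/-- Sections over disjoint open sets glue. -/
theorem pathSecOn_sUnion {X : Type*} [TopologicalSpace X] [Nonempty X]
    (W : Set (Set (X × X))) (ho : ∀ V ∈ W, IsOpen V) (hd : W.PairwiseDisjoint id)
    (hs : ∀ V ∈ W, PathSecOn X V) : PathSecOn X (⋃₀ W) := by
  classical
  have h : ∀ V : W, ∃ s : X × X → C(unitInterval, X), ContinuousOn s V ∧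
      ∀ p ∈ (V : Set (X × X)), (s p) 0 = p.1 ∧ (s p) 1 = p.2 :=
    fun V => (pathSecOn_iff _).1 (hs V V.2)
  choose s hc hse using h
  obtain ⟨x₀⟩ := ‹Nonempty X›
  let g : X × X → C(unitInterval, X) := fun p =>
    if h : ∃ V : W, p ∈ (V : Set (X × X)) then s h.choose p else ContinuousMap.const _ x₀
  have hg : ∀ V : W, ∀ p ∈ (V : Set (X × X)), g p = s V p := by
    intro V p hp
    have h : ∃ V : W, p ∈ (V : Set (X × X)) := ⟨V, hp⟩
    have e : h.choose = V := by
      by_contra hne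
      exact (Set.disjoint_left.1 (hd h.choose.2 V.2 (fun e => hne (Subtype.ext e))))
        h.choose_spec hp
    simp only [g, dif_pos h, e]
  rw [pathSecOn_iff]
  refine ⟨g, ?_, ?_⟩
  · rintro p ⟨V, hV, hp⟩
    have h1 : ContinuousAt (s ⟨V, hV⟩) p := (hc ⟨V, hV⟩).continuousAt ((ho V hV).mem_nhds hp)
    refine (h1.congr ?_).continuousWithinAt
    filter_upwards [(ho V hV).mem_nhds hp] with y hy
    exact (hg ⟨V, hV⟩ y hy).symm
  · rintro p ⟨V, hV, hp⟩
    rw [hg ⟨V, hV⟩ p hp]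
    exact hse ⟨V, hV⟩ p hp

/-- Ostrand-type decomposition. -/
theorem CovDimLE.decompose {Y : Type*} [TopologicalSpace Y] [NormalSpace Y] [ParacompactSpace Y]
    {k : ℕ} (hY : CovDimLE Y k) (U : Set (Set Y)) (hU : ∀ V ∈ U, IsOpen V)
    (hc : ⋃₀ U = Set.univ) :
    ∃ W : Fin (k + 1) → Set (Set Y), (∀ i, ∀ V ∈ W i, IsOpen V) ∧
      (∀ i, ∀ V ∈ W i, ∃ O ∈ U, V ⊆ O) ∧ (∀ i, (W i).PairwiseDisjoint id) ∧
      ∀ y, ∃ i, ∃ V ∈ W i, y ∈ V := by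
  classical
  obtain ⟨A, hAo, hAc, hAr, hAk⟩ := hY U hU hc
  obtain ⟨f, hf⟩ := PartitionOfUnity.exists_isSubordinate (ι := A) isClosed_univ
    (fun V => (V : Set Y)) (fun V => hAo V V.2) (by rw [← Set.sUnion_eq_iUnion, hAc])
  have hfmem : ∀ (V : A) y, 0 < f V y → y ∈ (V : Set Y) := fun V y h =>
    hf V (subset_tsupport _ (ne_of_gt h))
  let G : Finset A → Set Y := fun I =>
    {y | (∀ i ∈ I, 0 < f i y) ∧ ∀ i ∈ I, ∀ j, j ∉ I → f j y < f i y}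
  have hGo : ∀ I, IsOpen (G I) := by
    intro I
    rw [isOpen_iff_mem_nhds]
    rintro y ⟨h1, h2⟩
    obtain ⟨N, hN, hfin⟩ := f.locallyFinite y
    have e1 : ∀ᶠ z in nhds y, ∀ i ∈ I, 0 < f i z := by
      rw [Filter.eventually_all_finset]
      intro i hi
      exact (f i).continuous.continuousAt.eventually (lt_mem_nhds (h1 i hi))
    have e2 : ∀ᶠ z in nhds y, ∀ i ∈ I, ∀ j ∈ hfin.toFinset, j ∉ I → f j z < f i z := by
      rw [Filter.eventually_all_finset]
      intro i hi
      rw [Filter.eventually_all_finset]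
      intro j _
      by_cases hj : j ∈ I
      · simp [hj]
      · filter_upwards [(f j).continuous.continuousAt.eventually_lt
          (f i).continuous.continuousAt (h2 i hi j hj)] with z hz _ using hz
    filter_upwards [e1, e2, hN] with z hz1 hz2 hzN
    refine ⟨hz1, fun i hi j hj => ?_⟩
    by_cases hjf : j ∈ hfin.toFinset
    · exact hz2 i hi j hjf hj
    · have : f j z = 0 := by
        by_contra hne
        exact hjf (by rw [Set.Finite.mem_toFinset]; exact ⟨z, hne, hzN⟩)
      rw [this]
      exact hz1 i hi
  refine ⟨fun i => {V | ∃ I : Finset A, I.card = i + 1 ∧ V = G I}, ?_, ?_, ?_, ?_⟩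
  · rintro i V ⟨I, _, rfl⟩
    exact hGo I
  · rintro i V ⟨I, hI, rfl⟩
    obtain ⟨a, ha⟩ : I.Nonempty := Finset.card_pos.1 (by omega)
    obtain ⟨O, hO, hsub⟩ := hAr a a.2
    exact ⟨O, hO, fun y hy => hsub (hfmem a y (hy.1 a ha))⟩
  · rintro i V ⟨I, hI, rfl⟩ V' ⟨J, hJ, rfl⟩ hne
    have hIJ : I ≠ J := fun h => hne (by rw [h])
    refine Set.disjoint_left.2 fun y hy hy' => ?_
    have h1 : ∃ a ∈ I, a ∉ J := by
      by_contra! h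
      exact hIJ (Finset.eq_of_subset_of_card_le h (by omega))
    have h2 : ∃ a ∈ J, a ∉ I := by
      by_contra! h
      exact hIJ (Finset.eq_of_subset_of_card_le h (by omega)).symm
    obtain ⟨a, haI, haJ⟩ := h1
    obtain ⟨b, hbJ, hbI⟩ := h2
    exact lt_asymm (hy.2 a haI b hbI) (hy'.2 b hbJ a haJ)
  · intro y
    obtain ⟨hfin, hcard⟩ := hAk y
    have hsub : ∀ V : A, 0 < f V y → (V : Set Y) ∈ hfin.toFinset := fun V h => by
      rw [Set.Finite.mem_toFinset]
      exact ⟨V.2, hfmem V y h⟩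
    have hfin2 : {V : A | 0 < f V y}.Finite :=
      Set.Finite.of_injOn (f := Subtype.val) (t := {V ∈ A | y ∈ V})
        (fun V h => ⟨V.2, hfmem V y h⟩) Subtype.val_injective.injOn hfin
    let I := hfin2.toFinset
    have hI : ∀ V, V ∈ I ↔ 0 < f V y := fun V => by simp [I]
    have hIc : I.card ≤ k + 1 := by
      refine le_trans ?_ hcard
      rw [Set.ncard_eq_toFinset_card _ hfin]
      exact Finset.card_le_card_of_injOn Subtype.val (fun V h => hsub V ((hI V).1 h))
        Subtype.val_injective.injOn
    obtain ⟨a, ha⟩ := f.exists_pos (Set.mem_univ y)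
    have hpos : 0 < I.card := Finset.card_pos.2 ⟨a, (hI a).2 ha⟩
    refine ⟨⟨I.card - 1, by omega⟩, G I, ⟨I, by simp; omega, rfl⟩, fun i hi => (hI i).1 hi, ?_⟩
    intro i hi j hj
    rw [hI] at hi hj
    linarith

/-- Local contraction in an ENR. -/
theorem IsENR.local_paths {X : Type*} [TopologicalSpace X] (hX : IsENR X) (a : X) :
    ∃ N : Set X, IsOpen N ∧ a ∈ N ∧ ∃ γ : ∀ x : N, Path (x : X) a, Continuous ↿γ := by
  obtain ⟨n, e, O, r, he, hO, hsub, hr, hre⟩ := hX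
  obtain ⟨ε, hε, hball⟩ := Metric.isOpen_iff.1 hO (e a) (hsub ⟨a, rfl⟩)
  refine ⟨e ⁻¹' Metric.ball (e a) ε, Metric.isOpen_ball.preimage he.continuous, by simp [hε], ?_⟩
  have hmem : ∀ p : (e ⁻¹' Metric.ball (e a) ε) × unitInterval,
      AffineMap.lineMap (e p.1) (e a) (p.2 : ℝ) ∈ O := fun p =>
    hball ((convex_ball (e a) ε).lineMap_mem p.1.2 (Metric.mem_ball_self hε) p.2.2)
  let g : (e ⁻¹' Metric.ball (e a) ε) × unitInterval → Set.range e := fun p =>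
    ⟨r ⟨_, hmem p⟩, hr _⟩
  have hg : Continuous g := by
    refine Continuous.subtype_mk (r.continuous.comp (Continuous.subtype_mk ?_ _)) _
    have := he.continuous
    simp only [AffineMap.lineMap_apply_module]
    fun_prop
  let h : (e ⁻¹' Metric.ball (e a) ε) × unitInterval → X := fun p => he.toHomeomorph.symm (g p)
  have hh : Continuous h := he.toHomeomorph.symm.continuous.comp hg
  have heh : ∀ p, e (h p) = r ⟨_, hmem p⟩ := fun p => by
    have := he.toHomeomorph.apply_symm_apply (g p)
    exact congrArg Subtype.val this
  have h0 : ∀ x, h (x, 0) = x := fun x => he.injective (by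
    rw [heh, hre] <;> simp)
  have h1 : ∀ x, h (x, 1) = a := fun x => he.injective (by
    rw [heh, hre] <;> simp)
  exact ⟨fun x => ⟨⟨fun t => h (x, t), by fun_prop⟩, h0 x, h1 x⟩, hh⟩

theorem IsENR.local_sec {X : Type*} [TopologicalSpace X] [PathConnectedSpace X] (hX : IsENR X)
    (p : X × X) : ∃ O : Set (X × X), IsOpen O ∧ p ∈ O ∧ PathSecOn X O := by
  obtain ⟨N, hN, ha, γ, hγ⟩ := hX.local_paths p.1
  obtain ⟨M, hM, hb, δ, hδ⟩ := hX.local_paths p.2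
  refine ⟨N ×ˢ M, hN.prod hM, ⟨ha, hb⟩, ?_⟩
  let γ' : ∀ z : (N ×ˢ M : Set (X × X)), Path (z : X × X).1 p.1 := fun z => γ ⟨z.1.1, z.2.1⟩
  let δ' : ∀ z : (N ×ˢ M : Set (X × X)), Path (z : X × X).2 p.2 := fun z => δ ⟨z.1.2, z.2.2⟩
  have hγ' : Continuous ↿γ' := hγ.comp
    (f := fun w : (N ×ˢ M : Set (X × X)) × unitInterval => ((⟨w.1.1.1, w.1.2.1⟩ : N), w.2)) (by fun_prop)
  have hδ' : Continuous ↿δ' := hδ.comp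
    (f := fun w : (N ×ˢ M : Set (X × X)) × unitInterval => ((⟨w.1.1.2, w.1.2.2⟩ : M), w.2)) (by fun_prop)
  let c : Path p.1 p.2 := PathConnectedSpace.somePath _ _
  have hcc : Continuous ↿(fun _ : (N ×ˢ M : Set (X × X)) => c) := c.continuous.comp continuous_snd
  have h1 := Path.trans_continuous_family γ' hγ' (fun _ => c) hcc
  have h2 := Path.trans_continuous_family _ h1 _ (Path.symm_continuous_family δ' hδ')
  let T : C((N ×ˢ M : Set (X × X)) × unitInterval, X) := ⟨_, h2⟩
  refine ⟨T.curry, fun z => ⟨?_, ?_⟩⟩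
  · exact (((γ' z).trans c).trans (δ' z).symm).source
  · exact (((γ' z).trans c).trans (δ' z).symm).target

theorem fibre_cover {X : Type*} [TopologicalSpace X] [PathConnectedSpace X] (hX : IsENR X)
    (F : Set (X × X)) {m : ℕ} (hF : CovDimLE F m) :
    ∃ U : Fin (m + 1) → Set (X × X), (∀ i, IsOpen (U i)) ∧ (∀ i, PathSecOn X (U i)) ∧
      F ⊆ ⋃ i, U i := by
  classical
  have hm : TopologicalSpace.MetrizableSpace X := by
    obtain ⟨n, e, O, r, he, -⟩ := hX
    exact he.metrizableSpace
  let _ : MetricSpace (X × X) := TopologicalSpace.metrizableSpaceMetric (X × X)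
  have hne : Nonempty X := inferInstance
  obtain ⟨W, hWo, hWr, hWd, hWc⟩ := hF.decompose
    {V | ∃ O : Set (X × X), IsOpen O ∧ PathSecOn X O ∧ V = Subtype.val ⁻¹' O}
    (by rintro V ⟨O, hO, -, rfl⟩; exact hO.preimage continuous_subtype_val)
    (by
      refine Set.eq_univ_of_forall fun p => ?_
      obtain ⟨O, hO, hp, hs⟩ := hX.local_sec (p : X × X)
      exact ⟨_, ⟨O, hO, hs, rfl⟩, hp⟩)
  have hch : ∀ V : Set F, ∃ O : Set (X × X), (∃ i, V ∈ W i) →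
      IsOpen O ∧ PathSecOn X O ∧ V ⊆ Subtype.val ⁻¹' O := by
    intro V
    by_cases h : ∃ i, V ∈ W i
    · obtain ⟨i, hi⟩ := h
      obtain ⟨_, ⟨O, hO, hs, rfl⟩, hsub⟩ := hWr i V hi
      exact ⟨O, fun _ => ⟨hO, hs, hsub⟩⟩
    · exact ⟨∅, fun h' => absurd h' h⟩
  choose O hO using hch
  let E : Set F → Set (X × X) := fun V =>
    {x | Metric.infEDist x (Subtype.val '' V) < Metric.infEDist x (Subtype.val '' Vᶜ)} ∩ O V
  have hEo : ∀ i, ∀ V ∈ W i, IsOpen (E V) := fun i V hV =>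
    (isOpen_lt Metric.continuous_infEDist Metric.continuous_infEDist).inter (hO V ⟨i, hV⟩).1
  refine ⟨fun i => ⋃₀ (E '' W i), fun i => ?_, fun i => ?_, ?_⟩
  · apply isOpen_sUnion
    rintro _ ⟨V, hV, rfl⟩
    exact hEo i V hV
  · apply pathSecOn_sUnion
    · rintro _ ⟨V, hV, rfl⟩
      exact hEo i V hV
    · rintro _ ⟨V, hV, rfl⟩ _ ⟨V', hV', rfl⟩ hne
      have hd : Disjoint V V' := hWd i hV hV' (fun h => hne (by rw [h]))
      refine Set.disjoint_left.2 fun x hx hx' => ?_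
      have h1 : Metric.infEDist x (Subtype.val '' Vᶜ) ≤ Metric.infEDist x (Subtype.val '' V') :=
        Metric.infEDist_anti (Set.image_mono hd.subset_compl_left)
      have h2 : Metric.infEDist x (Subtype.val '' V'ᶜ) ≤ Metric.infEDist x (Subtype.val '' V) :=
        Metric.infEDist_anti (Set.image_mono hd.subset_compl_right)
      exact lt_irrefl _ ((hx.1.trans_le h1).trans (hx'.1.trans_le h2))
    · rintro _ ⟨V, hV, rfl⟩
      exact (hO V ⟨i, hV⟩).2.1.mono_set Set.inter_subset_right
  · intro p hp
    obtain ⟨i, V, hV, hpV⟩ := hWc ⟨p, hp⟩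
    refine Set.mem_iUnion.2 ⟨i, E V, ⟨V, hV, rfl⟩, ?_, (hO V ⟨i, hV⟩).2.2 hpV⟩
    have h0 : Metric.infEDist p (Subtype.val '' V) = 0 :=
      Metric.infEDist_zero_of_mem ⟨_, hpV, rfl⟩
    have h1 : p ∉ closure (Subtype.val '' Vᶜ) := by
      obtain ⟨Q, hQ, rfl⟩ := isOpen_induced_iff.1 (hWo i V hV)
      intro hcl
      obtain ⟨_, hz, ⟨w, hw, rfl⟩⟩ := mem_closure_iff.1 hcl Q hQ hpV
      exact hw hz
    show Metric.infEDist p _ < Metric.infEDist p _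
    rw [h0]
    exact Metric.infEDist_pos_iff_notMem_closure.2 h1

theorem CovDimLE.closed_subset {Y : Type*} [TopologicalSpace Y] {k : ℕ} (hY : CovDimLE Y k)
    {Z : Set Y} (hZ : IsClosed Z) : CovDimLE Z k := by
  intro U hU hc
  obtain ⟨A, hAo, hAc, hAr, hAk⟩ := hY ({O | IsOpen O ∧ Subtype.val ⁻¹' O ∈ U} ∪ {Zᶜ})
    (by
      rintro V (⟨h, -⟩ | rfl)
      · exact h
      · exact hZ.isOpen_compl)
    (by
      refine Set.eq_univ_of_forall fun y => ?_
      by_cases hy : y ∈ Z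
      · obtain ⟨V, hV, hyV⟩ : (⟨y, hy⟩ : Z) ∈ ⋃₀ U := hc ▸ Set.mem_univ _
        obtain ⟨O, hO, rfl⟩ := isOpen_induced_iff.1 (hU V hV)
        exact ⟨O, Or.inl ⟨hO, hV⟩, hyV⟩
      · exact ⟨Zᶜ, Or.inr rfl, hy⟩)
  refine ⟨(fun V : Set Y => (Subtype.val ⁻¹' V : Set Z)) '' {V ∈ A | (V ∩ Z).Nonempty},
    ?_, ?_, ?_, ?_⟩
  · rintro _ ⟨V, hV, rfl⟩
    exact (hAo V hV.1).preimage continuous_subtype_val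
  · refine Set.eq_univ_of_forall fun y => ?_
    obtain ⟨V, hV, hyV⟩ : (y : Y) ∈ ⋃₀ A := hAc ▸ Set.mem_univ _
    exact ⟨_, ⟨V, ⟨hV, y, hyV, y.2⟩, rfl⟩, hyV⟩
  · rintro _ ⟨V, ⟨hV, z, hzV, hzZ⟩, rfl⟩
    obtain ⟨O, (⟨-, hO⟩ | rfl), hsub⟩ := hAr V hV
    · exact ⟨_, hO, Set.preimage_mono hsub⟩
    · exact absurd hzZ (hsub hzV)
  · intro y
    obtain ⟨hfin, hcard⟩ := hAk y
    have hsub : {V ∈ (fun V : Set Y => (Subtype.val ⁻¹' V : Set Z)) ''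
        {V ∈ A | (V ∩ Z).Nonempty} | y ∈ V} ⊆
        (fun V : Set Y => (Subtype.val ⁻¹' V : Set Z)) '' {V ∈ A | (y : Y) ∈ V} := by
      rintro _ ⟨⟨V, hV, rfl⟩, hy⟩
      exact ⟨V, ⟨hV.1, hy⟩, rfl⟩
    exact ⟨(hfin.image _).subset hsub,
      (Set.ncard_le_ncard hsub (hfin.image _)).trans ((Set.ncard_image_le hfin).trans hcard)⟩

theorem normalSpace_of_closed_surj {A B : Type*} [TopologicalSpace A] [TopologicalSpace B]
    [NormalSpace A] (q : A → B) (hq : Continuous q) (hc : IsClosedMap q)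
    (hs : Function.Surjective q) : NormalSpace B where
  normal s t hsc htc hd := by
    obtain ⟨u, v, hu, hv, hsu, htv, huv⟩ := normal_separation (hsc.preimage hq)
      (htc.preimage hq) (hd.preimage q)
    refine ⟨(q '' uᶜ)ᶜ, (q '' vᶜ)ᶜ, (hc _ hu.isClosed_compl).isOpen_compl,
      (hc _ hv.isClosed_compl).isOpen_compl, ?_, ?_, ?_⟩
    · rintro y hy ⟨x, hx, rfl⟩
      exact hx (hsu hy)
    · rintro y hy ⟨x, hx, rfl⟩
      exact hx (htv hy)
    · refine Set.disjoint_left.2 fun y hy hy' => ?_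
      obtain ⟨x, rfl⟩ := hs y
      have h1 : x ∈ u := by by_contra h; exact hy ⟨x, h, rfl⟩
      have h2 : x ∈ v := by by_contra h; exact hy' ⟨x, h, rfl⟩
      exact Set.disjoint_left.1 huv h1 h2

/-- The surjective case with a normal target. -/
theorem cover_of_closed_surj {X Y : Type*} [TopologicalSpace X]
    [TopologicalSpace Y] [PathConnectedSpace X] (hX : IsENR X)
    [ParacompactSpace Y] [NormalSpace Y] (k : ℕ) (hY : CovDimLE Y k)
    (q : X × X → Y) (hqcont : Continuous q) (hqclosed : IsClosedMap q)
    (m : ℕ) (hfib : ∀ y : Y, CovDimLE (q ⁻¹' {y}) m) :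
    ∃ U : Fin (k + 1) × Fin (m + 1) → Set (X × X), (∀ i, IsOpen (U i)) ∧
      (∀ i, PathSecOn X (U i)) ∧ ∀ p, ∃ i, p ∈ U i := by
  classical
  have hne : Nonempty X := inferInstance
  obtain ⟨W, hWo, hWr, hWd, hWc⟩ := hY.decompose
    {V | IsOpen V ∧ ∃ U : Fin (m + 1) → Set (X × X), (∀ i, IsOpen (U i)) ∧
      (∀ i, PathSecOn X (U i)) ∧ q ⁻¹' V ⊆ ⋃ i, U i}
    (fun V hV => hV.1)
    (by
      refine Set.eq_univ_of_forall fun y => ?_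
      obtain ⟨U, hUo, hUs, hUc⟩ := fibre_cover hX _ (hfib y)
      refine ⟨(q '' (⋃ i, U i)ᶜ)ᶜ, ⟨(hqclosed _
        (isOpen_iUnion hUo).isClosed_compl).isOpen_compl, U, hUo, hUs, ?_⟩, ?_⟩
      · intro p hp
        by_contra h
        exact hp ⟨p, h, rfl⟩
      · rintro ⟨p, hp, rfl⟩
        exact hp (hUc rfl))
  have hch : ∀ V : Set Y, ∃ U : Fin (m + 1) → Set (X × X), (∃ j, V ∈ W j) →
      (∀ i, IsOpen (U i)) ∧ (∀ i, PathSecOn X (U i)) ∧ q ⁻¹' V ⊆ ⋃ i, U i := by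
    intro V
    by_cases h : ∃ j, V ∈ W j
    · obtain ⟨j, hj⟩ := h
      obtain ⟨V', ⟨-, U, h1, h2, h3⟩, hsub⟩ := hWr j V hj
      exact ⟨U, fun _ => ⟨h1, h2, (Set.preimage_mono hsub).trans h3⟩⟩
    · exact ⟨fun _ => ∅, fun h' => absurd h' h⟩
  choose U hU using hch
  have ho : ∀ j i, ∀ V ∈ W j, IsOpen (q ⁻¹' V ∩ U V i) := fun j i V hV =>
    ((hWo j V hV).preimage hqcont).inter ((hU V ⟨j, hV⟩).1 i)
  refine ⟨fun ji => ⋃₀ ((fun V => q ⁻¹' V ∩ U V ji.2) '' W ji.1), ?_, ?_, ?_⟩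
  · rintro ⟨j, i⟩
    apply isOpen_sUnion
    rintro _ ⟨V, hV, rfl⟩
    exact ho j i V hV
  · rintro ⟨j, i⟩
    apply pathSecOn_sUnion
    · rintro _ ⟨V, hV, rfl⟩
      exact ho j i V hV
    · rintro _ ⟨V, hV, rfl⟩ _ ⟨V', hV', rfl⟩ hne
      have hd : Disjoint V V' := hWd j hV hV' (fun h => hne (by rw [h]))
      exact Set.disjoint_left.2 fun x hx hx' => Set.disjoint_left.1 hd hx.1 hx'.1
    · rintro _ ⟨V, hV, rfl⟩
      exact ((hU V ⟨j, hV⟩).2.1 i).mono_set Set.inter_subset_right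
  · intro p
    obtain ⟨j, V, hV, hp⟩ := hWc (q p)
    obtain ⟨i, hi⟩ := Set.mem_iUnion.1 ((hU V ⟨j, hV⟩).2.2 hp)
    exact ⟨(j, i), _, ⟨V, hV, rfl⟩, hp, hi⟩

/-- If `X` is a path-connected normal ENR, `Y` is paracompact of covering dimension at
most `k`, and `q : X × X → Y` is a closed continuous map all of whose fibres have
covering dimension at most `m`, then `TC(X) ≤ (k + 1)(m + 1)`. -/
theorem topComplexity_le_of_closed_map_dim {X Y : Type*} [TopologicalSpace X]
    [TopologicalSpace Y] [PathConnectedSpace X] [NormalSpace X] (hX : IsENR X)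
    [ParacompactSpace Y] (k : ℕ) (hY : CovDimLE Y k)
    (q : X × X → Y) (hqcont : Continuous q) (hqclosed : IsClosedMap q)
    (m : ℕ) (hfib : ∀ y : Y, CovDimLE (q ⁻¹' {y}) m) :
    TopComplexity X ≤ (((k + 1) * (m + 1) : ℕ) : ℕ∞) := by
  have hm : TopologicalSpace.MetrizableSpace X := by
    obtain ⟨n, e, O, r, he, -⟩ := hX
    exact he.metrizableSpace
  let _ : MetricSpace (X × X) := TopologicalSpace.metrizableSpaceMetric (X × X)
  have hZ : IsClosed (Set.range q) := hqclosed.isClosed_range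
  let q' : X × X → Set.range q := Set.rangeFactorization q
  have hq'c : Continuous q' := hqcont.subtype_mk _
  have hq'cl : IsClosedMap q' := by
    intro C hC
    rw [isClosed_induced_iff]
    refine ⟨q '' C, hqclosed C hC, ?_⟩
    ext ⟨y, hy⟩
    constructor
    · rintro ⟨x, hx, hxy⟩
      exact ⟨x, hx, Subtype.ext hxy⟩
    · rintro ⟨x, hx, hxy⟩
      exact ⟨x, hx, congrArg Subtype.val hxy⟩
  have hN : NormalSpace (Set.range q) :=
    normalSpace_of_closed_surj q' hq'c hq'cl Set.rangeFactorization_surjective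
  have hP : ParacompactSpace (Set.range q) := hZ.isClosedEmbedding_subtypeVal.paracompactSpace
  have hfib' : ∀ y : Set.range q, CovDimLE (q' ⁻¹' {y}) m := by
    intro y
    have : q' ⁻¹' {y} = q ⁻¹' {(y : Y)} := by
      ext x
      exact Subtype.ext_iff
    rw [this]
    exact hfib y
  obtain ⟨U, hUo, hUs, hUc⟩ :=
    cover_of_closed_surj hX k (hY.closed_subset hZ) q' hq'c hq'cl m hfib'
  refine sInf_le ⟨(k + 1) * (m + 1), rfl, fun i => U (finProdFinEquiv.symm i), ?_, ?_, ?_⟩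
  · intro i
    exact ⟨_, hUo _, (Set.inter_univ _).symm⟩
  · intro p _
    obtain ⟨i, hi⟩ := hUc p
    exact Set.mem_iUnion.2 ⟨finProdFinEquiv i, by simpa using hi⟩
  · intro i
    exact hUs _
end

section
/- Let n ≤ r be positive integers and let Pⁿ denote real projective n-space. Suppose there exists an axial map a : Pⁿ × Pⁿ → P^r, i.e. a continuous map whose restriction to each factor {*} × Pⁿ and Pⁿ × {*} is homotopic to the standard inclusion Pⁿ ↪ P^r induced by the linear inclusion ℝ^{n+1} ⊆ ℝ^{r+1}. Then TC(Pⁿ) ≤ r + 1. -/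
open Set

/-- Real projective `n`-space: the quotient of `ℝ^{n+1} \ {0}` by the scalar action of
`ℝ \ {0}`. -/
def RealProj (n : ℕ) : Type :=
  Quot (fun v w : {x : Fin (n + 1) → ℝ // x ≠ 0} =>
    ∃ c : ℝ, c ≠ 0 ∧ c • (v : Fin (n + 1) → ℝ) = (w : Fin (n + 1) → ℝ))

instance (n : ℕ) : TopologicalSpace (RealProj n) :=
  inferInstanceAs (TopologicalSpace (Quot _))

/-- Extension by zero `ℝ^{n+1} → ℝ^{r+1}`. -/
def extVec (n r : ℕ) (x : Fin (n + 1) → ℝ) : Fin (r + 1) → ℝ :=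
  fun j => if h : (j : ℕ) < n + 1 then x ⟨(j : ℕ), h⟩ else 0

/-- The standard inclusion `Pⁿ ↪ P^r` induced by the linear inclusion
`ℝ^{n+1} ⊆ ℝ^{r+1}`. -/
def projIncl (n r : ℕ) (h : n ≤ r) : RealProj n → RealProj r :=
  Quot.map
    (fun v => ⟨extVec n r v.1, fun hz => v.2 (funext fun i => by
      have hi : (i : ℕ) < r + 1 := lt_of_lt_of_le i.2 (by omega)
      have h2 := congrFun hz ⟨(i : ℕ), hi⟩
      simpa [extVec, i.2] using h2)⟩)
    (fun v w ⟨c, hc, hcv⟩ => ⟨c, hc, funext fun j => by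
      by_cases hj : (j : ℕ) < n + 1
      · have h2 := congrFun hcv ⟨(j : ℕ), hj⟩
        simpa [extVec, hj] using h2
      · simp [extVec, hj]⟩)

/-- Two maps are homotopic. -/
def FnHomotopic {X Y : Type*} [TopologicalSpace X] [TopologicalSpace Y]
    (f g : X → Y) : Prop :=
  ∃ H : X × unitInterval → Y, Continuous H ∧ (∀ x, H (x, 0) = f x) ∧ ∀ x, H (x, 1) = g x

/-- Euclidean model space. -/
abbrev EE (n : ℕ) : Type := EuclideanSpace ℝ (Fin (n + 1))

/-- The unit sphere. -/
abbrev SS (n : ℕ) : Type := Metric.sphere (0 : EE n) 1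

/-- Class of a nonzero vector. -/
def mkE {n : ℕ} (w : {w : EE n // w ≠ 0}) : RealProj n :=
  Quot.mk _ ⟨fun i => w.1 i, fun h => w.2 (by ext i; exact congrFun h i)⟩

lemma continuous_mkE (n : ℕ) : Continuous (mkE (n := n)) := by
  refine continuous_quot_mk.comp ?_
  refine Continuous.subtype_mk ?_ _
  fun_prop

lemma mkE_surj {n : ℕ} (p : RealProj n) : ∃ w, mkE (n := n) w = p := by
  induction p using Quot.ind with
  | mk v =>
    refine ⟨⟨WithLp.toLp 2 v.1, fun h => v.2 ?_⟩, ?_⟩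
    · have := congrArg (WithLp.ofLp) h
      simpa using this
    · rfl

lemma mkE_eq_of_smul {n : ℕ} (v w : {w : EE n // w ≠ 0}) (c : ℝ) (hc : c ≠ 0)
    (h : c • v.1 = w.1) : mkE v = mkE w := by
  refine Quot.sound ⟨c, hc, ?_⟩
  funext i
  have := congrArg (fun u : EE n => u i) h
  simpa using this

/-- The orthogonal projection onto the line through a vector. -/
noncomputable def prj {n : ℕ} (z : EE n) : EE n →L[ℝ] EE n :=
  (‖z‖ ^ 2)⁻¹ • (innerSL ℝ z).smulRight z

lemma prj_apply {n : ℕ} (z w : EE n) : prj z w = ((‖z‖ ^ 2)⁻¹ * inner ℝ z w) • z := by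
  simp [prj, smul_smul]

lemma prj_smul {n : ℕ} (z : EE n) (c : ℝ) (hc : c ≠ 0) : prj (c • z) = prj z := by
  ext1 w
  rw [prj_apply, prj_apply, norm_smul, inner_smul_left, smul_smul]
  by_cases hz : z = 0
  · simp [hz]
  have : ‖z‖ ≠ 0 := by simpa using hz
  congr 1
  simp only [Real.norm_eq_abs, mul_pow, sq_abs, conj_trivial]
  field_simp

/-- The projection operator attached to a point in projective space. -/
noncomputable def QQ {n : ℕ} : RealProj n → (EE n →L[ℝ] EE n) :=
  Quot.lift (fun v => prj (WithLp.toLp 2 v.1)) (by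
    rintro v w ⟨c, hc, h⟩
    show prj (WithLp.toLp 2 v.1) = prj (WithLp.toLp 2 w.1)
    rw [← h, WithLp.toLp_smul, prj_smul _ _ hc])

lemma QQ_mkE {n : ℕ} (w : {w : EE n // w ≠ 0}) : QQ (mkE w) = prj w.1 := rfl

lemma continuous_prj {n : ℕ} : Continuous (fun w : {w : EE n // w ≠ 0} => prj w.1) := by
  unfold prj
  have h1 : Continuous (fun w : {w : EE n // w ≠ 0} => (‖w.1‖ ^ 2)⁻¹) := by
    refine Continuous.inv₀ (by fun_prop) ?_
    intro w
    have := w.2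
    simpa using this
  have h2 : Continuous (fun w : {w : EE n // w ≠ 0} => (innerSL ℝ w.1).smulRight w.1) := by
    have h : Continuous (fun w : {w : EE n // w ≠ 0} =>
        ContinuousLinearMap.smulRightL ℝ (EE n) (EE n) (innerSL ℝ w.1) w.1) := by fun_prop
    exact h
  exact h1.smul h2

/-- The tautological quotient map. -/
def mkQ {n : ℕ} (v : {x : Fin (n + 1) → ℝ // x ≠ 0}) : RealProj n := Quot.mk _ v

lemma isQuotientMap_mkQ {n : ℕ} : Topology.IsQuotientMap (mkQ (n := n)) :=
  isQuotientMap_quot_mk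

/-- Change of model for nonzero vectors. -/
def toEE {n : ℕ} (v : {x : Fin (n + 1) → ℝ // x ≠ 0}) : {w : EE n // w ≠ 0} :=
  ⟨WithLp.toLp 2 v.1, fun h => v.2 (by
        have := congrArg (WithLp.ofLp) h
        simpa using this)⟩

lemma continuous_toEE {n : ℕ} : Continuous (toEE (n := n)) := by
  refine Continuous.subtype_mk ?_ _
  fun_prop

lemma isQuotientMap_mkE {n : ℕ} : Topology.IsQuotientMap (mkE (n := n)) := by
  refine Topology.IsQuotientMap.of_comp (continuous_toEE (n := n)) (continuous_mkE n) ?_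
  exact isQuotientMap_mkQ

lemma continuous_QQ {n : ℕ} : Continuous (QQ (n := n)) := by
  rw [isQuotientMap_mkE.continuous_iff]
  exact continuous_prj

lemma prj_self {n : ℕ} (z : EE n) : prj z z = z := by
  rw [prj_apply]
  by_cases hz : z = 0
  · simp [hz]
  have : ‖z‖ ≠ 0 := by simpa using hz
  rw [real_inner_self_eq_norm_sq, inv_mul_cancel₀ (by positivity), one_smul]

lemma QQ_line {n : ℕ} (p : RealProj n) : ∃ z : EE n, z ≠ 0 ∧ QQ p = prj z := by
  obtain ⟨w, rfl⟩ := mkE_surj p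
  exact ⟨w.1, w.2, rfl⟩

lemma QQ_idem {n : ℕ} (p : RealProj n) (w : EE n) : QQ p (QQ p w) = QQ p w := by
  obtain ⟨z, hz, h⟩ := QQ_line p
  rw [h, prj_apply z w, map_smul, prj_self]

lemma QQ_inner_ne {n : ℕ} (p : RealProj n) {v w : EE n} (hv : QQ p v = v) (hw : QQ p w = w)
    (hv0 : v ≠ 0) (hw0 : w ≠ 0) : inner ℝ v w ≠ 0 := by
  obtain ⟨z, hz, h⟩ := QQ_line p
  rw [h, prj_apply] at hv hw
  rw [← hv] at hv0 ⊢
  rw [← hw] at hw0 ⊢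
  rw [inner_smul_left, inner_smul_right]
  have h1 := (smul_ne_zero_iff.1 hv0).1
  have h2 := (smul_ne_zero_iff.1 hw0).1
  have h3 : inner ℝ z z ≠ (0:ℝ) := by simpa using hz
  simp only [conj_trivial]
  exact mul_ne_zero h1 (mul_ne_zero h2 h3)

lemma QQ_unique {n : ℕ} (p : RealProj n) {v w : EE n} (hv : QQ p v = v) (hw : QQ p w = w)
    (hv0 : ‖v‖ = 1) (hw0 : ‖w‖ = 1) (hpos : 0 < inner ℝ v w) : v = w := by
  obtain ⟨z, hz, h⟩ := QQ_line p
  rw [h, prj_apply] at hv hw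
  set c := (‖z‖ ^ 2)⁻¹ * inner ℝ z v
  set d := (‖z‖ ^ 2)⁻¹ * inner ℝ z w
  have hzn : 0 < ‖z‖ := by simpa using hz
  rw [← hv, norm_smul, Real.norm_eq_abs] at hv0
  rw [← hw, norm_smul, Real.norm_eq_abs] at hw0
  have hcd : |c| = |d| := by
    have : |c| * ‖z‖ = |d| * ‖z‖ := by rw [hv0, hw0]
    exact mul_right_cancel₀ hzn.ne' this
  rw [← hv, ← hw, inner_smul_left, inner_smul_right] at hpos
  simp only [conj_trivial, real_inner_self_eq_norm_sq] at hpos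
  rcases abs_eq_abs.1 hcd with h1 | h1
  · rw [← hv, ← hw, h1]
  · exfalso
    rw [h1] at hpos
    nlinarith [mul_nonneg (mul_self_nonneg d) (sq_nonneg ‖z‖)]

lemma ne_zero_of_sphere {n : ℕ} (x : SS n) : (x : EE n) ≠ 0 := by
  intro h
  have := norm_eq_of_mem_sphere x
  rw [h] at this
  simp at this

/-- The double covering `Sⁿ → Pⁿ`. -/
def piS {n : ℕ} (x : SS n) : RealProj n := mkE ⟨x.1, ne_zero_of_sphere x⟩

lemma continuous_piS {n : ℕ} : Continuous (piS (n := n)) :=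
  (continuous_mkE n).comp (by fun_prop)

lemma piS_neg {n : ℕ} (x : SS n) : piS (-x) = piS x := by
  refine mkE_eq_of_smul _ _ (-1) (by norm_num) ?_
  simp

lemma QQ_piS {n : ℕ} (x : SS n) : QQ (piS x) x.1 = x.1 := by
  unfold piS
  rw [QQ_mkE, prj_self]

lemma piS_eq {n : ℕ} {x y : SS n} (h : piS x = piS y) : x = y ∨ x = -y := by
  have hx := QQ_piS x
  have hy := QQ_piS y
  rw [h] at hx
  have nx := norm_eq_of_mem_sphere x
  have ny := norm_eq_of_mem_sphere y
  have h0 := QQ_inner_ne _ hx hy (ne_zero_of_sphere x) (ne_zero_of_sphere y)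
  rcases lt_or_gt_of_ne h0 with h1 | h1
  · right
    ext1
    refine QQ_unique (piS y) hx ?_ nx ?_ ?_
    · simpa using hy
    · simp
    · simpa using h1
  · left
    ext1
    exact QQ_unique (piS y) hx hy nx ny h1

lemma piS_surj {n : ℕ} (p : RealProj n) : ∃ x : SS n, piS x = p := by
  obtain ⟨w, rfl⟩ := mkE_surj p
  have hw : ‖w.1‖ ≠ 0 := by simpa using w.2
  refine ⟨⟨‖w.1‖⁻¹ • w.1, by simp [norm_smul, hw]⟩, ?_⟩
  exact mkE_eq_of_smul _ _ ‖w.1‖ hw (by simp [smul_smul, hw])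

/-- Normalization of a nonzero vector. -/
noncomputable def nrm {n : ℕ} (w : {w : EE n // w ≠ 0}) : SS n :=
  ⟨‖w.1‖⁻¹ • w.1, by
    have hw : ‖w.1‖ ≠ 0 := by simpa using w.2
    simp [norm_smul, hw]⟩

lemma continuous_nrm {n : ℕ} : Continuous (nrm (n := n)) := by
  refine Continuous.subtype_mk ?_ _
  have h1 : Continuous (fun w : {w : EE n // w ≠ 0} => (‖w.1‖)⁻¹) := by
    refine Continuous.inv₀ (by fun_prop) ?_
    intro w
    have := w.2
    simpa using this
  exact h1.smul continuous_subtype_val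

lemma piS_nrm {n : ℕ} (w : {w : EE n // w ≠ 0}) : piS (nrm w) = mkE w := by
  have hw : ‖w.1‖ ≠ 0 := by simpa using w.2
  exact mkE_eq_of_smul _ _ ‖w.1‖ hw (by simp [nrm, smul_smul, hw])

lemma isOpenQuotientMap_piS {n : ℕ} : IsOpenQuotientMap (piS (n := n)) := by
  refine ⟨piS_surj, continuous_piS, ?_⟩
  intro V hV
  rw [← isQuotientMap_mkE.isOpen_preimage]
  have : mkE ⁻¹' (piS '' V) = nrm ⁻¹' (V ∪ (fun x => -x) ⁻¹' V) := by
    ext v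
    constructor
    · rintro ⟨x, hx, hxv⟩
      rw [← piS_nrm] at hxv
      rcases piS_eq hxv with h | h
      · left
        exact h ▸ hx
      · right
        show -nrm v ∈ V
        exact h ▸ hx
    · rintro (h | h)
      · exact ⟨nrm v, h, piS_nrm v⟩
      · exact ⟨-nrm v, h, (piS_neg _).trans (piS_nrm v)⟩
  rw [this]
  exact (hV.union (hV.preimage continuous_neg)).preimage continuous_nrm

lemma preconnectedSpace_SS {n : ℕ} (hn : 0 < n) : PreconnectedSpace (SS n) := by
  rw [← isPreconnected_iff_preconnectedSpace]
  apply isPreconnected_sphere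
  rw [rank_eq_card_basis (EuclideanSpace.basisFun (Fin (n+1)) ℝ).toBasis]
  simp only [Fintype.card_fin]
  norm_cast
  omega

/-- The vector of the rotation path from `x` to `± y`. -/
noncomputable def rotVec {n : ℕ} (σ : SS n × SS n → ℝ) (q : (SS n × SS n) × unitInterval) : EE n :=
  (1 - (q.2 : ℝ)) • (q.1.1 : EE n) + ((q.2 : ℝ) * (σ q.1 / |σ q.1|)) • (q.1.2 : EE n)

lemma rotVec_ne {n : ℕ} (σ : SS n × SS n → ℝ)
    (h2 : ∀ x y, σ (x, -y) = -σ (x, y)) (q : (SS n × SS n) × unitInterval)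
    (h0 : σ q.1 ≠ 0) (hd : piS q.1.1 = piS q.1.2 → 0 < σ (q.1.1, q.1.1)) :
    rotVec σ q ≠ 0 := by
  obtain ⟨⟨x, y⟩, t⟩ := q
  simp only at h0 hd
  intro h
  unfold rotVec at h
  simp only at h
  have hs : σ (x, y) / |σ (x, y)| = 1 ∨ σ (x, y) / |σ (x, y)| = -1 := by
    rcases lt_or_gt_of_ne h0 with h1 | h1
    · right
      rw [abs_of_neg h1, div_neg, div_self h0]
    · left
      rw [abs_of_pos h1, div_self h0]
  have hxe : (1 - (t : ℝ)) • (x : EE n) = -(((t : ℝ) * (σ (x, y) / |σ (x, y)|)) • (y : EE n)) :=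
    eq_neg_of_add_eq_zero_left h
  have hnorm := congrArg norm hxe
  have nx := norm_eq_of_mem_sphere x
  have ny := norm_eq_of_mem_sphere y
  have t0 := t.2.1
  have t1 := t.2.2
  have habs : abs (σ (x, y) / |σ (x, y)|) = 1 := by
    rcases hs with hs | hs <;> rw [hs] <;> simp
  rw [norm_neg, norm_smul, norm_smul, nx, ny, Real.norm_eq_abs, Real.norm_eq_abs, abs_mul, habs,
    abs_of_nonneg t0, abs_of_nonneg (by linarith)] at hnorm
  have ht : (t : ℝ) = 1 / 2 := by linarith
  rw [ht] at hxe
  rcases hs with hs | hs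
  · have hxy : x = -y := by
      ext1
      rw [hs] at hxe
      have := congrArg (fun u => (2 : ℝ) • u) hxe
      simp only [smul_neg, smul_smul] at this
      norm_num at this
      simpa using this
    have hp := hd (by rw [hxy, piS_neg])
    have hyx : y = -x := by rw [hxy, neg_neg]
    rw [hyx, h2] at hs
    rw [abs_neg, abs_of_pos hp, neg_div, div_self hp.ne'] at hs
    norm_num at hs
  · have hxy : x = y := by
      ext1
      rw [hs] at hxe
      have := congrArg (fun u => (2 : ℝ) • u) hxe
      simp only [smul_neg, smul_smul] at this
      norm_num at this
      simpa using this
    have hp := hd (by rw [hxy])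
    rw [← hxy, abs_of_pos hp, div_self hp.ne'] at hs
    norm_num at hs

lemma pathSec_of_lift {n : ℕ} (U : Set (RealProj n × RealProj n)) (hU : IsOpen U)
    (σ : SS n × SS n → ℝ) (hσ : Continuous σ)
    (h1 : ∀ x y, σ (-x, y) = -σ (x, y)) (h2 : ∀ x y, σ (x, -y) = -σ (x, y))
    (h0 : ∀ x y, (piS x, piS y) ∈ U → σ (x, y) ≠ 0)
    (hd : ∀ x y, (piS x, piS y) ∈ U → piS x = piS y → 0 < σ (x, x)) :
    PathSecOn (RealProj n) U := by
  classical
  have hq2 : IsOpenQuotientMap (Prod.map (piS (n := n)) (piS (n := n))) :=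
    isOpenQuotientMap_piS.prodMap isOpenQuotientMap_piS
  set P := Prod.map (piS (n := n)) (piS (n := n)) with hP
  have hq3 : IsOpenQuotientMap (U.restrictPreimage P) :=
    ⟨U.restrictPreimage_surjective hq2.surjective, hq2.continuous.restrictPreimage,
      hq2.isOpenMap.restrictPreimage U⟩
  have hq4 : IsOpenQuotientMap (Prod.map (U.restrictPreimage P) (id : unitInterval → unitInterval)) :=
    hq3.prodMap .id
  let Ψ : (P ⁻¹' U) × unitInterval → RealProj n := fun q =>
    mkE ⟨rotVec σ (q.1.1, q.2), rotVec_ne σ h2 _ (h0 _ _ q.1.2) (hd _ _ q.1.2)⟩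
  have hΨ : Continuous Ψ := by
    refine (continuous_mkE n).comp (Continuous.subtype_mk ?_ _)
    have hs : Continuous (fun q : (P ⁻¹' U) × unitInterval => σ q.1.1 / |σ q.1.1|) := by
      refine Continuous.div (by fun_prop) (by fun_prop) ?_
      intro q
      simpa using h0 _ _ q.1.2
    unfold rotVec
    fun_prop
  have hwd : ∀ q q' : (P ⁻¹' U), U.restrictPreimage P q = U.restrictPreimage P q' →
      ∀ t, Ψ (q, t) = Ψ (q', t) := by
    rintro ⟨⟨x, y⟩, hxy⟩ ⟨⟨x', y'⟩, hxy'⟩ h t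
    have h' := congrArg Subtype.val h
    simp only [hP, restrictPreimage_coe, Prod.map_apply, Prod.mk.injEq] at h'
    have : rotVec σ ((x', y'), t) = rotVec σ ((x, y), t) ∨
        rotVec σ ((x', y'), t) = - rotVec σ ((x, y), t) := by
      unfold rotVec
      rcases piS_eq h'.1 with hx | hx <;> rcases piS_eq h'.2 with hy | hy <;>
        subst hx <;> subst hy
      · left; rfl
      · left; simp [h2, neg_div]
      · right; simp [h1, neg_div]; abel
      · right; simp [h1, h2]; abel
    rcases this with h3 | h3
    · exact mkE_eq_of_smul _ _ 1 one_ne_zero (by simp [h3])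
    · exact mkE_eq_of_smul _ _ (-1) (by norm_num) (by simp [h3])
  choose rep hrep using hq3.surjective
  let Φ : U × unitInterval → RealProj n := fun p => Ψ (rep p.1, p.2)
  have hΦ : Continuous Φ := by
    rw [← hq4.continuous_comp_iff]
    have : Φ ∘ Prod.map (U.restrictPreimage P) (id : unitInterval → unitInterval) = Ψ := by
      funext q
      exact hwd _ _ (hrep _) _
    rw [this]
    exact hΨ
  refine ⟨(ContinuousMap.mk Φ hΦ).curry, ?_⟩
  intro p
  have hp : P (rep p).1 = p.1 := congrArg Subtype.val (hrep p)
  constructor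
  · show Ψ (rep p, 0) = _
    rw [← hp]
    refine mkE_eq_of_smul _ _ 1 one_ne_zero ?_
    simp [rotVec]
  · show Ψ (rep p, 1) = _
    rw [← hp]
    have hne := h0 _ _ (rep p).2
    refine mkE_eq_of_smul _ _ (|σ (rep p).1| / σ (rep p).1)
      (div_ne_zero (abs_ne_zero.2 hne) hne) ?_
    have : |σ (rep p).1| ≠ 0 := abs_ne_zero.2 hne
    have hne' : σ (rep p).1 ≠ 0 := hne
    simp only [rotVec, Set.Icc.coe_one, sub_self, zero_smul, zero_add, one_mul, smul_smul]
    rw [div_mul_div_cancel₀ hne', div_self this, one_smul]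

lemma topComplexity_le {X : Type*} [TopologicalSpace X] (k : ℕ) (U : Fin k → Set (X × X))
    (hU : ∀ i, IsOpen (U i)) (hc : ∀ p, ∃ i, p ∈ U i) (hs : ∀ i, PathSecOn X (U i)) :
    TopComplexity X ≤ (k : ℕ∞) := by
  refine sInf_le ⟨k, rfl, U, fun i => ⟨U i, hU i, by simp⟩, ?_, hs⟩
  intro p _
  simpa using hc p

lemma QQ_injective {n : ℕ} : Function.Injective (QQ (n := n)) := by
  intro p q h
  obtain ⟨x, rfl⟩ := piS_surj p
  obtain ⟨y, rfl⟩ := piS_surj q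
  have hx := QQ_piS x
  have hy := QQ_piS y
  rw [h] at hx
  unfold piS at hx ⊢
  rw [QQ_mkE, prj_apply] at hx
  refine (mkE_eq_of_smul _ _ _ ?_ hx).symm
  intro hz
  simp only [hz, zero_smul] at hx
  exact ne_zero_of_sphere x hx.symm

instance instT2RealProj (n : ℕ) : T2Space (RealProj n) :=
  T2Space.of_injective_continuous QQ_injective continuous_QQ

lemma isClosed_diag_RealProj {n : ℕ} : IsClosed {p : RealProj n × RealProj n | p.1 = p.2} :=
  isClosed_eq continuous_fst continuous_snd

theorem tc_of_biodd {n r : ℕ} (F : SS n × SS n → EE r) (hF : Continuous F)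
    (h1 : ∀ x y, F (-x, y) = -F (x, y)) (h2 : ∀ x y, F (x, -y) = -F (x, y))
    (h0 : ∀ q, F q ≠ 0) (i0 : Fin (r + 1)) (hi : ∀ x, 0 < F (x, x) i0) :
    TopComplexity (RealProj n) ≤ ((r + 1 : ℕ) : ℕ∞) := by
  have hq2 : IsOpenQuotientMap (Prod.map (piS (n := n)) (piS (n := n))) :=
    isOpenQuotientMap_piS.prodMap isOpenQuotientMap_piS
  have hcoord : ∀ i, Continuous (fun q => F q i) := fun i => by fun_prop
  have hrep : ∀ x y x' y', piS x = piS x' → piS y = piS y' → ∀ i, F (x, y) i ≠ 0 → F (x', y') i ≠ 0 := by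
    intro x y x' y' hx hy i hne
    rcases piS_eq hx with hx | hx <;> rcases piS_eq hy with hy | hy <;> subst hx <;> subst hy
    · exact hne
    · simpa [h2] using hne
    · simpa [h1] using hne
    · simpa [h1, h2] using hne
  let V : Fin (r + 1) → Set (RealProj n × RealProj n) := fun i =>
    Prod.map piS piS '' {q | F q i ≠ 0}
  have hV : ∀ i, IsOpen (V i) := fun i =>
    hq2.isOpenMap _ (isOpen_ne_fun (hcoord i) continuous_const)
  have hV0 : ∀ i x y, (piS x, piS y) ∈ V i → F (x, y) i ≠ 0 := by
    rintro i x y ⟨⟨x', y'⟩, hne, h⟩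
    simp only [Prod.map_apply, Prod.mk.injEq] at h
    exact hrep _ _ _ _ h.1 h.2 i hne
  refine topComplexity_le (r + 1) (fun i => V i ∩ {p | p.1 = p.2 → i = i0}) ?_ ?_ ?_
  · intro i
    refine (hV i).inter ?_
    by_cases h : i = i0
    · simp [h]
    · simp only [h, imp_false]
      exact isClosed_diag_RealProj.isOpen_compl
  · rintro ⟨p, q⟩
    obtain ⟨x, rfl⟩ := piS_surj p
    obtain ⟨y, rfl⟩ := piS_surj q
    by_cases h : piS x = piS y
    · exact ⟨i0, ⟨(x, x), (hi x).ne', by simp [h]⟩, fun _ => rfl⟩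
    · have : ∃ i, F (x, y) i ≠ 0 := by
        by_contra hcon
        push Not at hcon
        exact h0 (x, y) (by ext i; simpa using hcon i)
      obtain ⟨i, hne⟩ := this
      exact ⟨i, ⟨(x, y), hne, rfl⟩, fun h' => absurd h' h⟩
  · intro i
    refine pathSec_of_lift _ ?_ (fun q => F q i) (hcoord i) ?_ ?_ ?_ ?_
    · refine (hV i).inter ?_
      by_cases h : i = i0
      · simp [h]
      · simp only [h, imp_false]
        exact isClosed_diag_RealProj.isOpen_compl
    · intro x y; simp [h1]
    · intro x y; simp [h2]
    · intro x y h
      exact hV0 i x y h.1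
    · intro x y h hxy
      have : i = i0 := h.2 hxy
      subst this
      exact hi x

/-- `g` is an odd nonvanishing lift of the family of lines `ℓ`. -/
def OddLift {n r : ℕ} (ℓ : SS n → RealProj r) (g : SS n → EE r) : Prop :=
  Continuous g ∧ (∀ y, g (-y) = - g y) ∧ (∀ y, g y ≠ 0) ∧ ∀ y, QQ (ℓ y) (g y) = g y

lemma oddLift_step {n r : ℕ} (ℓ ℓ' : SS n → RealProj r) (hℓ' : Continuous ℓ')
    (hodd : ∀ y, ℓ' (-y) = ℓ' y) (hclose : ∀ y, ‖QQ (ℓ y) - QQ (ℓ' y)‖ < 1)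
    (g : SS n → EE r) (hg : OddLift ℓ g) : OddLift ℓ' (fun y => QQ (ℓ' y) (g y)) := by
  obtain ⟨hc, ho, hne, hl⟩ := hg
  refine ⟨(continuous_QQ.comp hℓ').clm_apply hc, ?_, ?_, ?_⟩
  · intro y
    simp [hodd, ho]
  · intro y h
    have h' : QQ (ℓ' y) (g y) = 0 := h
    have h1 : (QQ (ℓ y) - QQ (ℓ' y)) (g y) = g y := by
      rw [sub_apply, hl, h', sub_zero]
    have h2 := (QQ (ℓ y) - QQ (ℓ' y)).le_opNorm (g y)
    rw [h1] at h2
    have h3 : 0 < ‖g y‖ := by simpa using hne y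
    nlinarith [hclose y]
  · intro y
    exact QQ_idem _ _

lemma close_nhds {T : Type*} [TopologicalSpace T] {n r : ℕ} (ℓ : T × SS n → RealProj r)
    (hℓ : Continuous ℓ) (t0 : T) :
    ∀ᶠ t in nhds t0, ∀ y, ‖QQ (ℓ (t, y)) - QQ (ℓ (t0, y))‖ < 1 := by
  let G : C(T × SS n, EE r →L[ℝ] EE r) := ⟨fun q => QQ (ℓ q), continuous_QQ.comp hℓ⟩
  have hG : Continuous G.curry := G.curry.continuous
  have := (hG.continuousAt (x := t0)) (Metric.ball_mem_nhds (G.curry t0) one_pos)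
  filter_upwards [this] with t ht y
  have ht' : dist (G.curry t) (G.curry t0) < 1 := ht
  have := (ContinuousMap.dist_lt_iff one_pos).1 ht' y
  rw [dist_eq_norm] at this
  exact this

lemma family_lift {T : Type*} [TopologicalSpace T] [PreconnectedSpace T] {n r : ℕ}
    (ℓ : T × SS n → RealProj r) (hℓ : Continuous ℓ) (hneg : ∀ t y, ℓ (t, -y) = ℓ (t, y))
    (t0 : T) (h0 : ∃ g, OddLift (fun y => ℓ (t0, y)) g) (t : T) :
    ∃ g, OddLift (fun y => ℓ (t, y)) g := by
  let A : Set T := {t | ∃ g, OddLift (fun y => ℓ (t, y)) g}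
  have step : ∀ s s' : T, (∀ y, ‖QQ (ℓ (s, y)) - QQ (ℓ (s', y))‖ < 1) → s ∈ A → s' ∈ A := by
    rintro s s' h ⟨g, hg⟩
    exact ⟨_, oddLift_step _ _ (by fun_prop) (hneg s') h g hg⟩
  have hA : IsClopen A := by
    constructor
    · rw [← isOpen_compl_iff, isOpen_iff_mem_nhds]
      intro s hs
      filter_upwards [close_nhds ℓ hℓ s] with s' h hs'
      exact hs (step _ _ h hs')
    · rw [isOpen_iff_mem_nhds]
      intro s hs
      filter_upwards [close_nhds ℓ hℓ s] with s' h
      exact step _ _ (fun y => by rw [norm_sub_rev]; exact h y) hs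
  have := hA.eq_univ ⟨t0, h0⟩
  have h : t ∈ A := this ▸ mem_univ t
  exact h

lemma projIncl_lift {n r : ℕ} (hnr : n ≤ r) :
    ∃ g, OddLift (fun y : SS n => projIncl n r hnr (piS y)) g := by
  have hne : ∀ y : SS n, (WithLp.toLp 2 (extVec n r (fun i => y.1 i)) : EE r) ≠ 0 := by
    intro y hz
    apply ne_zero_of_sphere y
    ext i
    have hi : (i : ℕ) < r + 1 := lt_of_lt_of_le i.2 (by omega)
    have h2 := congrArg (fun u : EE r => u ⟨(i : ℕ), hi⟩) hz
    simpa [extVec, i.2] using h2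
  refine ⟨fun y => WithLp.toLp 2 (extVec n r (fun i => y.1 i)), ?_, ?_, hne, ?_⟩
  · refine (PiLp.continuous_toLp 2 _).comp ?_
    refine continuous_pi fun j => ?_
    unfold extVec
    split_ifs
    · fun_prop
    · fun_prop
  · intro y
    ext j
    simp only [extVec, PiLp.neg_apply]
    split_ifs <;> simp
  · intro y
    exact prj_self _

lemma lift_of_homotopic {n r : ℕ} (hnr : n ≤ r) (b : RealProj n → RealProj r)
    (h : FnHomotopic b (projIncl n r hnr)) :
    ∃ g, OddLift (fun y : SS n => b (piS y)) g := by
  obtain ⟨H, hH, hH0, hH1⟩ := h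
  have hp := continuous_piS (n := n)
  have := family_lift (fun q : unitInterval × SS n => H (piS q.2, q.1)) (by fun_prop)
    (fun t y => by simp [piS_neg]) 1 (by
      simp only [hH1]
      exact projIncl_lift hnr) 0
  simpa only [hH0] using this

/-- An axial map lifts to a bi-odd map. -/
lemma exists_biodd {n r : ℕ} (hn : 0 < n) (hnr : n ≤ r)
    (a : RealProj n × RealProj n → RealProj r) (ha : Continuous a) (x₀ : RealProj n)
    (h1 : FnHomotopic (fun x => a (x₀, x)) (projIncl n r hnr))
    (h2 : FnHomotopic (fun x => a (x, x₀)) (projIncl n r hnr)) :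
    ∃ F : SS n × SS n → EE r, Continuous F ∧ (∀ x y, F (-x, y) = -F (x, y)) ∧
      (∀ x y, F (x, -y) = -F (x, y)) ∧ ∀ q, ‖F q‖ = 1 := by
  have := preconnectedSpace_SS hn
  have hp := continuous_piS (n := n)
  obtain ⟨e, rfl⟩ := piS_surj x₀
  obtain ⟨f2, hf2c, hf2o, hf2n, hf2l⟩ := lift_of_homotopic hnr _ h2
  let ℓ : SS n × SS n → RealProj r := fun q => a (piS q.1, piS q.2)
  have hℓ : Continuous ℓ := by fun_prop
  have hex := family_lift ℓ hℓ (fun t y => by simp [ℓ, piS_neg]) e (lift_of_homotopic hnr _ h1)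
  -- normalized lifts
  have hex' : ∀ x, ∃ g : SS n → EE r, OddLift (fun y => ℓ (x, y)) g ∧ (∀ y, ‖g y‖ = 1) ∧
      0 < inner ℝ (g e) (f2 x) := by
    intro x
    obtain ⟨g, hgc, hgo, hgn, hgl⟩ := hex x
    have hin : inner ℝ (g e) (f2 x) ≠ 0 := QQ_inner_ne (ℓ (x, e)) (hgl e) (hf2l x) (hgn e) (hf2n x)
    have key : ∀ s : ℝ, (s = 1 ∨ s = -1) → 0 < s * inner ℝ (g e) (f2 x) →
        ∃ g : SS n → EE r, OddLift (fun y => ℓ (x, y)) g ∧ (∀ y, ‖g y‖ = 1) ∧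
        0 < inner ℝ (g e) (f2 x) := by
      intro s hs hpos
      have hs0 : s ≠ 0 := by rcases hs with rfl | rfl <;> norm_num
      have hs1 : |s| = 1 := by rcases hs with rfl | rfl <;> norm_num
      have hgn' : ∀ y, ‖g y‖ ≠ 0 := fun y => by simpa using hgn y
      refine ⟨fun y => (s * ‖g y‖⁻¹) • g y, ⟨?_, ?_, ?_, ?_⟩, ?_, ?_⟩
      · exact (continuous_const.mul (hgc.norm.inv₀ hgn')).smul hgc
      · intro y
        simp [hgo]
      · intro y
        exact smul_ne_zero (mul_ne_zero hs0 (inv_ne_zero (hgn' y))) (hgn y)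
      · intro y
        simp only [map_smul]
        rw [hgl y]
      · intro y
        rw [norm_smul, norm_mul, norm_inv, norm_norm, Real.norm_eq_abs, hs1, one_mul,
          inv_mul_cancel₀ (hgn' y)]
      · have hn0 : 0 < ‖g e‖⁻¹ := inv_pos.2 (by simpa using hgn e)
        simp only [inner_smul_left, conj_trivial]
        have := mul_pos hn0 hpos
        linarith
    rcases lt_or_gt_of_ne hin with h | h
    · exact key (-1) (Or.inr rfl) (by linarith)
    · exact key 1 (Or.inl rfl) (by linarith)
  choose g hgL hg1 hgp using hex'
  -- uniqueness
  have huniq : ∀ x (g' : SS n → EE r), OddLift (fun y => ℓ (x, y)) g' → 0 < inner ℝ (g' e) (f2 x) →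
      ∀ y, g x y = ‖g' y‖⁻¹ • g' y := by
    intro x g' hg' hpos y
    have hcont : Continuous (fun y => inner ℝ (g x y) (g' y)) :=
      (hgL x).1.inner hg'.1
    have hne : ∀ y, inner ℝ (g x y) (g' y) ≠ 0 := fun y =>
      QQ_inner_ne (ℓ (x, y)) ((hgL x).2.2.2 y) (hg'.2.2.2 y) ((hgL x).2.2.1 y) (hg'.2.2.1 y)
    have hge : 0 < inner ℝ (g x e) (g' e) := by
      -- all three vectors in a line
      obtain ⟨z, hz, hQ⟩ := QQ_line (ℓ (x, e))
      have e1 := (hgL x).2.2.2 e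
      have e2 := hg'.2.2.2 e
      have e3 : QQ (ℓ (x, e)) (f2 x) = f2 x := hf2l x
      simp only at e1 e2
      rw [hQ, prj_apply] at e1 e2 e3
      have p1 := hgp x
      have p2 := hpos
      rw [← e1, ← e3] at p1
      rw [← e2, ← e3] at p2
      rw [← e1, ← e2]
      generalize (‖z‖ ^ 2)⁻¹ * inner ℝ z (g x e) = α at *
      generalize (‖z‖ ^ 2)⁻¹ * inner ℝ z (g' e) = β at *
      generalize (‖z‖ ^ 2)⁻¹ * inner ℝ z (f2 x) = γ at *
      have hzz : 0 < inner ℝ z z := real_inner_self_pos.2 hz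
      simp only [inner_smul_left, inner_smul_right, conj_trivial] at p1 p2 ⊢
      have q1 : 0 < α * γ := by
        by_contra hcon
        push Not at hcon
        nlinarith
      have q2 : 0 < β * γ := by
        by_contra hcon
        push Not at hcon
        nlinarith
      have q3 : 0 < α * β := by
        by_contra hcon
        push Not at hcon
        nlinarith [mul_pos q1 q2, sq_nonneg γ]
      have := mul_pos q3 hzz
      linarith
    have hpos' : 0 < inner ℝ (g x y) (g' y) := by
      by_contra hcon
      push Not at hcon
      have := mem_range_of_exists_le_of_exists_ge hcont ⟨y, hcon⟩ ⟨e, hge.le⟩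
      obtain ⟨y', hy'⟩ := this
      exact hne y' hy'
    have hgn : 0 < ‖g' y‖ := by simpa using hg'.2.2.1 y
    refine QQ_unique (ℓ (x, y)) ((hgL x).2.2.2 y) ?_ (hg1 x y) ?_ ?_
    · rw [map_smul]
      congr 1
      exact hg'.2.2.2 y
    · rw [norm_smul, norm_inv, norm_norm, inv_mul_cancel₀ hgn.ne']
    · rw [inner_smul_right]
      positivity
  refine ⟨fun q => g q.1 q.2, ?_, ?_, ?_, ?_⟩
  · rw [continuous_iff_continuousAt]
    rintro ⟨x1, y1⟩
    have hc1 := close_nhds ℓ hℓ x1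
    let G : SS n × SS n → EE r := fun q => QQ (ℓ q) (g x1 q.2)
    have hG : Continuous G :=
      (continuous_QQ.comp hℓ).clm_apply ((hgL x1).1.comp continuous_snd)
    have hpos : ∀ᶠ x in nhds x1, 0 < inner ℝ (G (x, e)) (f2 x) := by
      have hcont : Continuous (fun x => inner ℝ (G (x, e)) (f2 x)) := by fun_prop
      refine hcont.continuousAt.eventually (lt_mem_nhds ?_)
      have : G (x1, e) = g x1 e := (hgL x1).2.2.2 e
      show 0 < inner ℝ (G (x1, e)) (f2 x1)
      rw [this]
      exact hgp x1
    have hev : ∀ᶠ q in nhds (x1, y1), ‖G q‖⁻¹ • G q = g q.1 q.2 := by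
      rw [nhds_prod_eq]
      filter_upwards [(hc1.and hpos).prod_inl (nhds y1)] with q hq
      refine (huniq q.1 (fun y => G (q.1, y)) ?_ hq.2 q.2).symm
      exact oddLift_step (fun y => ℓ (x1, y)) (fun y => ℓ (q.1, y)) (by fun_prop)
        (fun y => by simp [ℓ, piS_neg]) (fun y => by rw [norm_sub_rev]; exact hq.1 y) _ (hgL x1)
    refine ContinuousAt.congr ?_ hev
    refine ContinuousAt.smul (ContinuousAt.inv₀ hG.norm.continuousAt ?_) hG.continuousAt
    have : G (x1, y1) = g x1 y1 := (hgL x1).2.2.2 y1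
    rw [this, hg1]
    exact one_ne_zero
  · intro x y
    have h := huniq (-x) (fun y => - g x y) ?_ ?_ y
    · simp only [norm_neg, hg1, inv_one, one_smul] at h
      exact h
    · obtain ⟨c1, c2, c3, c4⟩ := hgL x
      refine ⟨c1.neg, fun y => by simp only [c2], fun y => neg_ne_zero.2 (c3 y), fun y => ?_⟩
      have : ℓ (-x, y) = ℓ (x, y) := by simp [ℓ, piS_neg]
      simp only [this, map_neg]
      exact congrArg _ (c4 y)
    · rw [hf2o, inner_neg_neg]
      exact hgp x
  · intro x y
    exact (hgL x).2.1 y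
  · intro q
    exact hg1 _ _

lemma even_approx {n r : ℕ} (hnr : n < r) (g : SS n → EE r) (hg : Continuous g)
    (hev : ∀ x, g (-x) = g x) :
    ∃ p : SS n → EE r, Continuous p ∧ (∀ x, p (-x) = p x) ∧ (∀ x, ‖p x - g x‖ < 1) ∧
      ∃ v : EE r, v ≠ 0 ∧ ∀ x, ∀ l : ℝ, 0 < l → p x + l • v ≠ 0 := by
  obtain ⟨G, hG⟩ := ContinuousMap.exists_restrict_eq (Y := EE r) (X := EE n)
    (Metric.isClosed_sphere (x := (0 : EE n)) (ε := 1)) (⟨g, hg⟩ : C(SS n, EE r))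
  have hG' : ∀ x : SS n, G x.1 = g x := fun x => by
    have := congrArg (fun f => f x) hG
    simpa using this
  obtain ⟨q, hq, hqa, -⟩ := Continuous.exists_contDiff_approx (E := EE n) (F := EE r)
    (f := G) (ε := fun _ => 1) 1 G.continuous continuous_const (fun _ => one_pos)
  have hq1 : ContDiff ℝ 1 q := by exact_mod_cast hq
  let P : EE n → EE r := fun x => (2⁻¹ : ℝ) • (q x + q (-x))
  have hP : ContDiff ℝ 1 P := by
    have : ContDiff ℝ 1 (fun x : EE n => q (-x)) := hq1.comp contDiff_neg
    exact (hq1.add this).const_smul _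
  have hPe : ∀ x, P (-x) = P x := fun x => by simp [P, add_comm]
  let f : EE n → EE r := fun x => ‖x‖ • P (‖x‖⁻¹ • x)
  have hf : ∀ x : EE n, x ≠ 0 → ContDiffAt ℝ 1 f x := by
    intro x hx
    have h1 : ContDiffAt ℝ 1 (fun x : EE n => ‖x‖) x := contDiffAt_norm ℝ hx
    have h2 : ContDiffAt ℝ 1 (fun x : EE n => ‖x‖⁻¹ • x) x :=
      (h1.inv (by simpa using hx)).smul contDiffAt_id
    exact h1.smul (hP.contDiffAt.comp x h2)
  have hd : dimH (f '' {x | x ≠ 0}) < Module.finrank ℝ (EE r) := by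
    have h1 : dimH (f '' {x | x ≠ 0}) ≤ dimH {x : EE n | x ≠ 0} := by
      apply dimH_image_le_of_locally_lipschitzOn
      intro x hx
      obtain ⟨K, t, ht, hl⟩ := (hf x hx).exists_lipschitzOnWith
      exact ⟨K, t, mem_nhdsWithin_of_mem_nhds ht, hl⟩
    have h2 : dimH {x : EE n | x ≠ 0} ≤ Module.finrank ℝ (EE n) :=
      (dimH_mono (subset_univ _)).trans_eq (Real.dimH_univ_eq_finrank _)
    refine (h1.trans h2).trans_lt ?_
    simp only [finrank_euclideanSpace, Fintype.card_fin]
    exact_mod_cast (by omega : n + 1 < r + 1)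
  have hdense := dense_compl_of_dimH_lt_finrank hd
  have hopen : IsOpen {w : EE r | w ≠ 0} := isOpen_ne
  obtain ⟨w, hw0, hw⟩ := hdense.inter_open_nonempty _ hopen (by
    exact exists_ne (0 : EE r))
  have hnorm : ∀ x : SS n, ‖x.1‖ = 1 := fun x => by simp
  refine ⟨fun x => P x.1, hP.continuous.comp continuous_subtype_val, fun x => hPe x.1, ?_,
    -w, by simpa using hw0, ?_⟩
  · intro x
    have e1 : ‖q x.1 - g x‖ < 1 := by
      rw [← hG', ← dist_eq_norm]; exact hqa _
    have e2 : ‖q (-x.1) - g x‖ < 1 := by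
      rw [← hev, ← hG', ← dist_eq_norm]; exact hqa _
    have : P x.1 - g x = (2⁻¹ : ℝ) • ((q x.1 - g x) + (q (-x.1) - g x)) := by
      simp only [P]; module
    rw [this, norm_smul]
    have := norm_add_le (q x.1 - g x) (q (-x.1) - g x)
    rw [Real.norm_of_nonneg (by norm_num)]
    linarith
  · intro x l hl h
    apply hw
    refine ⟨l⁻¹ • x.1, smul_ne_zero (inv_ne_zero hl.ne') (ne_zero_of_sphere x), ?_⟩
    have hn1 : ‖l⁻¹ • x.1‖ = l⁻¹ := by
      rw [norm_smul, hnorm, mul_one, Real.norm_of_nonneg (inv_nonneg.2 hl.le)]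
    show ‖l⁻¹ • x.1‖ • P (‖l⁻¹ • x.1‖⁻¹ • l⁻¹ • x.1) = w
    have hxx : l • l⁻¹ • x.1 = x.1 := by rw [smul_smul, mul_inv_cancel₀ hl.ne', one_smul]
    rw [hn1, inv_inv, hxx]
    have : P x.1 = l • w := by
      have h' : P x.1 + l • (-w) = 0 := h
      rw [smul_neg, ← sub_eq_add_neg, sub_eq_zero] at h'
      exact h'
    rw [this, smul_smul, inv_mul_cancel₀ hl.ne', one_smul]

theorem tc_of_biodd_lt {n r : ℕ} (hnr : n < r) (F : SS n × SS n → EE r) (hF : Continuous F)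
    (h1 : ∀ x y, F (-x, y) = -F (x, y)) (h2 : ∀ x y, F (x, -y) = -F (x, y))
    (hu : ∀ q, ‖F q‖ = 1) : TopComplexity (RealProj n) ≤ ((r + 1 : ℕ) : ℕ∞) := by
  obtain ⟨p, hp, hpe, hpa, v, hv, hpv⟩ := even_approx hnr (fun x => F (x, x))
    (by fun_prop) (fun x => by rw [h1, h2, neg_neg])
  have hnorm : ∀ x : SS n, ‖x.1‖ = 1 := fun x => by simp
  let c : SS n × SS n → ℝ := fun q => inner ℝ q.1.1 q.2.1
  have hc : Continuous c := by fun_prop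
  have hc1 : ∀ x y, c (-x, y) = - c (x, y) := fun x y => by simp [c]
  have hc2 : ∀ x y, c (x, -y) = - c (x, y) := fun x y => by simp [c]
  have hcd : ∀ x, c (x, x) = 1 := fun x => by simp [c, hnorm]
  have hcl : ∀ q, |c q| ≤ 1 := fun q => by
    have := abs_real_inner_le_norm q.1.1 q.2.1
    rwa [hnorm, hnorm, one_mul] at this
  let F2 : SS n × SS n → EE r := fun q => F q + c q • (p q.1 - F (q.1, q.1))
  have hF2 : Continuous F2 := by fun_prop
  have hF21 : ∀ x y, F2 (-x, y) = -F2 (x, y) := fun x y => by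
    simp only [F2, h1, h2, hc1, hpe]; module
  have hF22 : ∀ x y, F2 (x, -y) = -F2 (x, y) := fun x y => by
    simp only [F2, h2, hc2]; module
  have hF2d : ∀ x, F2 (x, x) = p x := fun x => by simp [F2, hcd]
  have hF20 : ∀ q, F2 q ≠ 0 := by
    intro q h
    have e : F q = -(c q • (p q.1 - F (q.1, q.1))) := eq_neg_of_add_eq_zero_left h
    have := hu q
    rw [e, norm_neg, norm_smul, Real.norm_eq_abs] at this
    have := mul_le_of_le_one_left (norm_nonneg (p q.1 - F (q.1, q.1))) (hcl q)
    have := hpa q.1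
    linarith
  let m : SS n × SS n → ℝ := fun q => ‖v‖ * ‖F2 q‖ * |c q| + inner ℝ (F2 q) (c q • v)
  have hm : Continuous m := by fun_prop
  have hm0 : ∀ q, 0 ≤ m q := fun q => by
    have := abs_real_inner_le_norm (F2 q) (c q • v)
    rw [norm_smul, Real.norm_eq_abs] at this
    have := neg_abs_le (inner ℝ (F2 q) (c q • v))
    simp only [m]
    nlinarith
  have hm1 : ∀ x y, m (-x, y) = m (x, y) := fun x y => by
    simp [m, hF21, hc1]
  have hm2 : ∀ x y, m (x, -y) = m (x, y) := fun x y => by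
    simp [m, hF22, hc2]
  have hmd : ∀ x, 0 < m (x, x) := by
    intro x
    rcases (hm0 (x, x)).lt_or_eq with h | h
    · exact h
    exfalso
    simp only [m, hF2d, hcd, abs_one, mul_one, one_smul] at h
    have h3 : inner ℝ (p x) (-v) = ‖p x‖ * ‖-v‖ := by
      rw [inner_neg_right, norm_neg]; linarith
    rw [inner_eq_norm_mul_iff_real] at h3
    have hpx : p x ≠ 0 := hF2d x ▸ hF20 (x, x)
    have hv' : 0 < ‖v‖ := norm_pos_iff.2 hv
    have hpx' : 0 < ‖p x‖ := norm_pos_iff.2 hpx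
    apply hpv x (‖p x‖ / ‖v‖) (by positivity)
    rw [norm_neg] at h3
    have : p x = ‖v‖⁻¹ • (‖v‖ • p x) := by rw [smul_smul, inv_mul_cancel₀ hv'.ne', one_smul]
    rw [this, h3]
    simp only [norm_smul, norm_neg, norm_inv, norm_norm]
    rw [smul_neg, smul_neg, smul_smul, ← neg_smul, ← add_smul]
    convert zero_smul ℝ v
    field_simp
    simp
  obtain ⟨i0, hi0⟩ : ∃ i, v i ≠ 0 := by
    by_contra! h
    exact hv (by ext i; simpa using h i)
  let φ : SS n → ℝ := fun x => - (v i0 * p x i0) / (m (x, x) * v i0 ^ 2)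
  have hφ : Continuous φ := by
    refine Continuous.div (by fun_prop) (by fun_prop) (fun x => ?_)
    have := hmd x
    positivity
  obtain ⟨T0, hT0⟩ : ∃ T0, ∀ x, φ x ≤ T0 := by
    obtain ⟨T0, hT⟩ := (isCompact_range hφ).bddAbove
    exact ⟨T0, fun x => hT ⟨x, rfl⟩⟩
  let T : ℝ := max T0 0 + 1
  have hT : 0 < T := by positivity
  have hTφ : ∀ x, φ x < T := fun x => by
    have := le_max_left T0 0
    have := hT0 x
    simp only [T]; linarith
  let F3 : SS n × SS n → EE r := fun q => F2 q + (T * m q * c q) • v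
  have hF30 : ∀ q, F3 q ≠ 0 := by
    intro q h
    have e : F2 q = -((T * m q * c q) • v) := eq_neg_of_add_eq_zero_left h
    have hmq : m q = 0 := by
      have e1 : m q = ‖v‖ * ‖-((T * m q * c q) • v)‖ * |c q|
          + inner ℝ (-((T * m q * c q) • v)) (c q • v) := by
        rw [← e]
      rw [e1, norm_neg, norm_smul, Real.norm_eq_abs, abs_mul, abs_mul, abs_of_pos hT,
        abs_of_nonneg (hm0 q), inner_neg_left, inner_smul_left, inner_smul_right,
        real_inner_self_eq_norm_sq, conj_trivial]
      have := abs_mul_abs_self (c q)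
      linear_combination (T * m q * ‖v‖ ^ 2) * this
    apply hF20 q
    rw [e, hmq]; simp
  refine tc_of_biodd (fun q => v i0 • F3 q) (by fun_prop) ?_ ?_ ?_ i0 ?_
  · intro x y
    simp only [F3, hF21, hm1, hc1]; module
  · intro x y
    simp only [F3, hF22, hm2, hc2]; module
  · intro q
    exact smul_ne_zero hi0 (hF30 q)
  · intro x
    have := hTφ x
    have hmx := hmd x
    simp only [φ] at this
    rw [div_lt_iff₀ (by positivity)] at this
    simp only [F3, hF2d, hcd, PiLp.smul_apply, PiLp.add_apply, smul_eq_mul]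
    nlinarith

/-- Local data for patching sections of a map. -/
structure PatchData {M B : Type} [TopologicalSpace M] [TopologicalSpace B]
    (p : M → B) (R : M → M) (U C : Set B) (lam : B → ℝ) (sj : B → M) (H : M × ℝ → M) : Prop where
  isOpen : IsOpen U
  isClosed : IsClosed C
  sub : C ⊆ U
  lam_cont : Continuous lam
  lam_nonneg : ∀ b, 0 ≤ lam b
  lam_off : ∀ b, b ∉ C → lam b = 0
  sj_cont : ContinuousOn sj U
  sj_sec : ∀ b ∈ U, p (sj b) = b
  H_cont : ContinuousOn H {q | p q.1 ∈ U}
  H_over : ∀ m t, p m ∈ U → p (H (m, t)) = p m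
  H_zero : ∀ m, p m ∈ U → H (m, 0) = R m
  H_one : ∀ m, p m ∈ U → H (m, 1) = sj (p m)

open Classical in
lemma patch_step {M B : Type} [TopologicalSpace M] [TopologicalSpace B]
    {p : M → B} {R : M → M} (hR : Continuous R) (hpR : ∀ m, p (R m) = p m)
    {U C : Set B} {lam : B → ℝ} {sj : B → M} {H : M × ℝ → M}
    (P : PatchData p R U C lam sj H) (L : B → ℝ) (hL : Continuous L) (hL0 : ∀ b, 0 ≤ L b)
    (s : B → M) (hs : ContinuousOn s {b | 0 < L b}) (hps : ∀ b, 0 < L b → p (s b) = b) :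
    ∃ s' : B → M, ContinuousOn s' {b | 0 < L b + lam b} ∧
      ∀ b, 0 < L b + lam b → p (s' b) = b := by
  let s' : B → M := fun b => if b ∈ U then
    (if L b < lam b then sj b else H (s b, min 1 (lam b / L b))) else R (s b)
  have hH : ∀ b, b ∈ U → 0 < L b → s' b = H (s b, min 1 (lam b / L b)) := by
    intro b hb hLb
    simp only [s', if_pos hb]
    split_ifs with h
    · rw [min_eq_left ((one_le_div hLb).2 h.le), P.H_one _ (by rwa [hps b hLb]), hps b hLb]
    · rfl
  have hLo : IsOpen {b | 0 < L b} := isOpen_lt continuous_const hL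
  refine ⟨s', ?_, ?_⟩
  · intro b hb
    apply ContinuousAt.continuousWithinAt
    by_cases hC : b ∈ C
    · have hU := P.sub hC
      rcases (hL0 b).lt_or_eq with h | h
      · have h1 : (fun b => H (s b, min 1 (lam b / L b))) =ᶠ[nhds b] s' := by
          filter_upwards [P.isOpen.mem_nhds hU, hLo.mem_nhds h] with c hc hc2
          exact (hH c hc hc2).symm
        refine ContinuousAt.congr ?_ h1
        have h2 : ContinuousAt s b := hs.continuousAt (hLo.mem_nhds h)
        have h3 : ContinuousAt (fun b => (s b, min 1 (lam b / L b))) b := by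
          refine h2.prodMk (continuousAt_const.min ?_)
          exact P.lam_cont.continuousAt.div hL.continuousAt h.ne'
        have h4 : ContinuousWithinAt H {q | p q.1 ∈ U} (s b, min 1 (lam b / L b)) :=
          P.H_cont _ (by simpa [hps b h] using hU)
        have h5 : Filter.Tendsto (fun b => (s b, min 1 (lam b / L b))) (nhds b)
            (nhdsWithin (s b, min 1 (lam b / L b)) {q | p q.1 ∈ U}) := by
          refine tendsto_nhdsWithin_iff.2 ⟨h3, ?_⟩
          filter_upwards [P.isOpen.mem_nhds hU, hLo.mem_nhds h] with c hc hc2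
          simpa [hps c hc2] using hc
        exact Filter.Tendsto.comp h4 h5
      · have hl : L b < lam b := by
          have : 0 < L b + lam b := hb
          linarith
        have h1 : sj =ᶠ[nhds b] s' := by
          filter_upwards [P.isOpen.mem_nhds hU, (isOpen_lt hL P.lam_cont).mem_nhds hl] with c hc hc2
          have hc2 : L c < lam c := hc2
          simp only [s', if_pos hc, if_pos hc2]
        exact (P.sj_cont.continuousAt (P.isOpen.mem_nhds hU)).congr h1
    · have h : 0 < L b := by
        have : 0 < L b + lam b := hb
        rwa [P.lam_off b hC, add_zero] at this
      have h1 : (fun b => R (s b)) =ᶠ[nhds b] s' := by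
        filter_upwards [P.isClosed.isOpen_compl.mem_nhds hC, hLo.mem_nhds h] with c hc hc2
        by_cases hcU : c ∈ U
        · rw [hH c hcU hc2, P.lam_off c hc, zero_div, min_eq_right zero_le_one,
            P.H_zero _ (by rwa [hps c hc2])]
        · simp only [s', if_neg hcU]
      refine ContinuousAt.congr ?_ h1
      exact hR.continuousAt.comp (hs.continuousAt (hLo.mem_nhds h))
  · intro b hb
    by_cases hU : b ∈ U
    · rcases (hL0 b).lt_or_eq with h | h
      · rw [hH b hU h, P.H_over _ _ (by rwa [hps b h]), hps b h]
      · have hl : L b < lam b := by linarith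
        simp only [s', if_pos hU, if_pos hl]
        exact P.sj_sec b hU
    · have h : 0 < L b := by
        rwa [P.lam_off b (fun h => hU (P.sub h)), add_zero] at hb
      simp only [s', if_neg hU, hpR]
      exact hps b h

lemma patch_all {M B : Type} [TopologicalSpace M] [TopologicalSpace B] [Nonempty M]
    {p : M → B} {R : M → M} (hR : Continuous R) (hpR : ∀ m, p (R m) = p m)
    {ι : Type} [Fintype ι] {U C : ι → Set B} {lam : ι → B → ℝ} {sj : ι → B → M}
    {H : ι → M × ℝ → M}
    (P : ∀ i, PatchData p R (U i) (C i) (lam i) (sj i) (H i))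
    (hcov : ∀ b, ∃ i, 0 < lam i b) :
    ∃ s : B → M, Continuous s ∧ ∀ b, p (s b) = b := by
  classical
  have key : ∀ S : Finset ι, ∃ s : B → M, ContinuousOn s {b | 0 < ∑ i ∈ S, lam i b} ∧
      ∀ b, 0 < ∑ i ∈ S, lam i b → p (s b) = b := by
    intro S
    induction S using Finset.induction_on with
    | empty =>
      refine ⟨fun _ => Classical.arbitrary M, ?_, ?_⟩
      · exact continuousOn_const
      · intro b hb; simp at hb
    | insert j S hj ih =>
      obtain ⟨s, hs, hps⟩ := ih
      have := patch_step hR hpR (P j) (fun b => ∑ i ∈ S, lam i b)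
        (continuous_finsetSum _ fun i _ => (P i).lam_cont)
        (fun b => Finset.sum_nonneg fun i _ => (P i).lam_nonneg b) s hs hps
      simpa only [Finset.sum_insert hj, add_comm] using this
  obtain ⟨s, hs, hps⟩ := key Finset.univ
  have hpos : ∀ b, 0 < ∑ i, lam i b := fun b => by
    obtain ⟨i, hi⟩ := hcov b
    exact Finset.sum_pos' (fun i _ => (P i).lam_nonneg b) ⟨i, Finset.mem_univ _, hi⟩
  refine ⟨s, ?_, fun b => hps b (hpos b)⟩
  rw [← continuousOn_univ]
  exact hs.mono fun b _ => hpos b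

section hspace
variable {X : Type} [TopologicalSpace X]

/-- The path object: `(x, y, u, γ)` with `γ` a path from `a (x, u)` to `y`. -/
abbrev MM (a : C(X × X, X)) : Type :=
  {m : (X × X) × (X × C(unitInterval, X)) //
    m.2.2 0 = a (m.1.1, m.2.1) ∧ m.2.2 1 = m.1.2}

/-- clamp -/
noncomputable def clp (t : ℝ) : unitInterval := projIcc 0 1 zero_le_one t

lemma continuous_clp : Continuous clp := continuous_projIcc (h := zero_le_one)

lemma clp_of_le {t : ℝ} (h : t ≤ 0) : clp t = 0 := projIcc_of_le_left _ h
lemma clp_of_ge {t : ℝ} (h : 1 ≤ t) : clp t = 1 := projIcc_of_right_le _ h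

/-- The waiting reparametrisation. -/
noncomputable def RR (a : C(X × X, X)) (m : MM a) : MM a :=
  ⟨(m.1.1, (m.1.2.1, m.1.2.2.comp ⟨fun t : unitInterval => clp (2 * t - 1), by
      exact continuous_clp.comp (by fun_prop)⟩)), by
    refine ⟨?_, ?_⟩
    · have : clp (2 * ((0 : unitInterval) : ℝ) - 1) = 0 := clp_of_le (by simp)
      simp only [ContinuousMap.comp_apply, ContinuousMap.coe_mk]
      rw [this]; exact m.2.1
    · have : clp (2 * ((1 : unitInterval) : ℝ) - 1) = 1 := clp_of_ge (by norm_num)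
      simp only [ContinuousMap.comp_apply, ContinuousMap.coe_mk]
      rw [this]; exact m.2.2⟩

lemma continuous_RR (a : C(X × X, X)) : Continuous (RR a) := by
  refine Continuous.subtype_mk ?_ _
  refine (by fun_prop : Continuous fun m : MM a => m.1.1).prodMk
    ((by fun_prop : Continuous fun m : MM a => m.1.2.1).prodMk ?_)
  exact (ContinuousMap.continuous_precomp _).comp (by fun_prop)

variable {a : C(X × X, X)} {U : Set X} {f0 f1 : C(U × X, X)}

/-- Restricted path object. -/
abbrev MU (a : C(X × X, X)) (U : Set X) : Type := {m : MM a // m.1.1.1 ∈ U}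

/-- extended homotopy -/
noncomputable def KK (K : f0.Homotopy f1) (q : (U × X) × ℝ) : X := K (clp q.2, q.1)

lemma continuous_KK (K : f0.Homotopy f1) : Continuous (KK K) :=
  K.continuous.comp ((continuous_clp.comp continuous_snd).prodMk continuous_fst)

lemma KK_zero (K : f0.Homotopy f1) (z : U × X) {t : ℝ} (h : t ≤ 0) : KK K (z, t) = f0 z := by
  simp [KK, clp_of_le h]
lemma KK_one (K : f0.Homotopy f1) (z : U × X) {t : ℝ} (h : 1 ≤ t) : KK K (z, t) = f1 z := by
  simp [KK, clp_of_ge h]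

/-- The concatenated path from `u` to `y`. -/
noncomputable def dl (K : f0.Homotopy f1) (q : MU a U × ℝ) : X :=
  if q.2 ≤ 1 then KK K ((⟨q.1.1.1.1.1, q.1.2⟩, q.1.1.1.2.1), 1 - q.2)
  else q.1.1.1.2.2 (clp (q.2 - 1))

lemma continuous_dl (K : f0.Homotopy f1) (h0 : ∀ z, f0 z = a (z.1.1, z.2)) :
    Continuous (dl (a := a) K) := by
  refine Continuous.if_le ?_ ?_ continuous_snd continuous_const ?_
  · refine (continuous_KK K).comp ?_
    refine Continuous.prodMk (Continuous.prodMk (Continuous.subtype_mk (by fun_prop) _)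
      (by fun_prop)) (by fun_prop)
  · have h1 : Continuous fun q : MU a U × ℝ => q.1.1.1.2.2 := by fun_prop
    have h2 : Continuous fun q : MU a U × ℝ => clp (q.2 - 1) := continuous_clp.comp (by fun_prop)
    exact h1.eval h2
  · intro q hq
    rw [KK_zero K _ (by rw [hq]; simp), clp_of_le (by rw [hq]; simp), q.1.1.2.1, h0]

lemma dl_of_nonpos (K : f0.Homotopy f1) (h1 : ∀ z, f1 z = z.2) (m : MU a U) {t : ℝ} (ht : t ≤ 0) :
    dl K (m, t) = m.1.1.2.1 := by
  rw [dl, if_pos (by show t ≤ 1; linarith), KK_one K _ (by show 1 ≤ 1 - t; linarith), h1]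

lemma dl_two (K : f0.Homotopy f1) (m : MU a U) :
    dl K (m, 2) = m.1.1.1.2 := by
  rw [dl, if_neg (by norm_num), clp_of_ge (by norm_num)]
  exact m.1.2.2

/-- time change -/
noncomputable def sg (t : ℝ) : ℝ := max (-1) (3 * t - 1)

/-- The path in the sliding homotopy. -/
noncomputable def et (K : f0.Homotopy f1) (q : (MU a U × ℝ) × unitInterval) : X :=
  if (q.2 : ℝ) ≤ 1 / 2 then
    KK K ((⟨q.1.1.1.1.1.1, q.1.1.2⟩, dl K (q.1.1, max (sg q.1.2) 0)),
      min (2 * q.2) (1 + min (sg q.1.2) 0))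
  else dl K (q.1.1, |sg q.1.2| + (2 - |sg q.1.2|) * (2 * q.2 - 1))

lemma continuous_sg : Continuous sg := by unfold sg; fun_prop

lemma continuous_et (K : f0.Homotopy f1) (h0 : ∀ z, f0 z = a (z.1.1, z.2))
    (h1 : ∀ z, f1 z = z.2) : Continuous (et (a := a) K) := by
  have hs := continuous_sg
  have hd := continuous_dl K h0
  refine Continuous.if_le ?_ ?_ (by fun_prop) continuous_const ?_
  · refine (continuous_KK K).comp ?_
    refine Continuous.prodMk (Continuous.prodMk (Continuous.subtype_mk (by fun_prop) _) ?_) ?_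
    · exact hd.comp (by fun_prop)
    · fun_prop
  · exact hd.comp (by fun_prop)
  · rintro ⟨⟨m, t⟩, c⟩ hc
    simp only at hc ⊢
    rw [hc]
    have hm1 : -1 ≤ sg t := le_max_left _ _
    have e1 : |sg t| + (2 - |sg t|) * (2 * (1 / 2) - 1) = |sg t| := by ring
    rw [e1]
    rcases le_total 0 (sg t) with h | h
    · rw [max_eq_left h, min_eq_right h, abs_of_nonneg h, KK_one K _ (by norm_num), h1]
    · rw [max_eq_right h, min_eq_left h, abs_of_nonpos h, dl_of_nonpos K h1 _ le_rfl, dl,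
        if_pos (by show - sg t ≤ 1; linarith), min_eq_right (by linarith)]
      simp

/-- The sliding homotopy. -/
noncomputable def HU (K : f0.Homotopy f1) (h0 : ∀ z, f0 z = a (z.1.1, z.2))
    (h1 : ∀ z, f1 z = z.2) (q : MU a U × ℝ) : MM a :=
  ⟨(q.1.1.1.1, (dl K (q.1, max (sg q.2) 0), (ContinuousMap.curry ⟨et K, continuous_et K h0 h1⟩) q)),
    by
    refine ⟨?_, ?_⟩
    · show et K (q, 0) = _
      rw [et, if_pos (by simp), KK_zero K _ (by simp), h0]
    · show et K (q, 1) = _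
      rw [et, if_neg (by norm_num)]
      have : |sg q.2| + (2 - |sg q.2|) * (2 * ((1 : unitInterval) : ℝ) - 1) = 2 := by
        simp; ring
      rw [this, dl_two]⟩

lemma continuous_HU (K : f0.Homotopy f1) (h0 : ∀ z, f0 z = a (z.1.1, z.2))
    (h1 : ∀ z, f1 z = z.2) : Continuous (HU (a := a) K h0 h1) := by
  refine Continuous.subtype_mk ?_ _
  have hs := continuous_sg
  refine Continuous.prodMk (by fun_prop) (Continuous.prodMk ?_ (ContinuousMap.continuous _))
  exact (continuous_dl K h0).comp (by fun_prop)

lemma HU_zero (K : f0.Homotopy f1) (h0 : ∀ z, f0 z = a (z.1.1, z.2))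
    (h1 : ∀ z, f1 z = z.2) (m : MU a U) : HU K h0 h1 (m, 0) = RR a m.1 := by
  have hsg : sg 0 = -1 := by simp [sg]
  apply Subtype.ext
  refine Prod.ext rfl (Prod.ext ?_ ?_)
  · show dl K (m, max (sg 0) 0) = m.1.1.2.1
    rw [hsg, dl_of_nonpos K h1 _ (by norm_num)]
  · ext t
    show et K ((m, 0), t) = m.1.1.2.2 (clp (2 * t - 1))
    have ht0 := t.2.1
    rw [et]
    simp only [hsg]
    split_ifs with h
    · rw [KK_zero K _ (by norm_num), clp_of_le (by linarith), m.1.2.1, h0,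
        dl_of_nonpos K h1 _ (by norm_num)]
    · have : |(-1 : ℝ)| + (2 - |(-1 : ℝ)|) * (2 * t - 1) = 2 * t := by
        rw [abs_neg, abs_one]; ring
      rw [this, dl, if_neg (by show ¬ (2 * (t : ℝ) ≤ 1); linarith)]

/-- The local section. -/
noncomputable def sU (K : f0.Homotopy f1) (h0 : ∀ z, f0 z = a (z.1.1, z.2))
    (h1 : ∀ z, f1 z = z.2) (z : U × X) : MM a :=
  ⟨((z.1.1, z.2), (z.2, (ContinuousMap.curry ⟨fun q : (U × X) × unitInterval =>
    KK K (q.1, 2 * q.2), (continuous_KK K).comp (by fun_prop)⟩) z)), by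
    refine ⟨?_, ?_⟩
    · show KK K (z, _) = _
      rw [KK_zero K _ (by simp), h0]
    · show KK K (z, _) = _
      rw [KK_one K _ (by simp), h1]⟩

lemma continuous_sU (K : f0.Homotopy f1) (h0 : ∀ z, f0 z = a (z.1.1, z.2))
    (h1 : ∀ z, f1 z = z.2) : Continuous (sU (a := a) K h0 h1) := by
  refine Continuous.subtype_mk ?_ _
  exact Continuous.prodMk (by fun_prop) (Continuous.prodMk (by fun_prop) (ContinuousMap.continuous _))

lemma HU_one (K : f0.Homotopy f1) (h0 : ∀ z, f0 z = a (z.1.1, z.2))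
    (h1 : ∀ z, f1 z = z.2) (m : MU a U) :
    HU K h0 h1 (m, 1) = sU K h0 h1 (⟨m.1.1.1.1, m.2⟩, m.1.1.1.2) := by
  have hsg : sg 1 = 2 := by norm_num [sg]
  apply Subtype.ext
  refine Prod.ext rfl (Prod.ext ?_ ?_)
  · show dl K (m, max (sg 1) 0) = m.1.1.1.2
    rw [hsg, max_eq_left (by norm_num), dl_two]
  · ext t
    show et K ((m, 1), t) = KK K ((⟨m.1.1.1.1, m.2⟩, m.1.1.1.2), 2 * (t : ℝ))
    rw [et]
    simp only [hsg]
    rw [max_eq_left (by norm_num), min_eq_right (by norm_num : (0 : ℝ) ≤ 2), dl_two]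
    split_ifs with h
    · rw [min_eq_left (by linarith)]
    · have : |(2 : ℝ)| + (2 - |(2 : ℝ)|) * (2 * t - 1) = 2 := by
        rw [abs_of_pos (by norm_num)]; ring
      rw [this, dl_two, KK_one K _ (by linarith), h1]

open Classical in
lemma exists_patchData [Nonempty (MM a)] (K : f0.Homotopy f1) (h0 : ∀ z, f0 z = a (z.1.1, z.2))
    (h1 : ∀ z, f1 z = z.2) (hU : IsOpen U) (lam : X → ℝ) (hlam : Continuous lam)
    (hl0 : ∀ x, 0 ≤ lam x) (C : Set X) (hC : IsClosed C) (hCU : C ⊆ U)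
    (hoff : ∀ x, x ∉ C → lam x = 0) :
    ∃ sj H, PatchData (fun m : MM a => m.1.1) (RR a) (Prod.fst ⁻¹' U) (Prod.fst ⁻¹' C)
      (fun b => lam b.1) sj H := by
  refine ⟨fun b => if h : b.1 ∈ U then sU K h0 h1 (⟨b.1, h⟩, b.2) else Classical.arbitrary _,
    fun q => if h : q.1.1.1.1 ∈ U then HU K h0 h1 (⟨q.1, h⟩, q.2) else q.1, ?_⟩
  constructor
  · exact hU.preimage continuous_fst
  · exact hC.preimage continuous_fst
  · exact preimage_mono hCU
  · exact hlam.comp continuous_fst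
  · exact fun b => hl0 _
  · exact fun b hb => hoff _ hb
  · rw [continuousOn_iff_continuous_domRestrict]
    have : Continuous fun b : (Prod.fst ⁻¹' U : Set (X × X)) =>
        sU K h0 h1 (⟨b.1.1, b.2⟩, b.1.2) :=
      (continuous_sU K h0 h1).comp ((Continuous.subtype_mk (by fun_prop) _).prodMk (by fun_prop))
    refine this.congr fun b => ?_
    simp only [Set.domRestrict_apply]
    rw [dif_pos (show b.1.1 ∈ U from b.2)]
  · intro b hb
    replace hb : b.1 ∈ U := hb
    rw [dif_pos hb]; rfl
  · rw [continuousOn_iff_continuous_domRestrict]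
    have : Continuous fun q : {q : MM a × ℝ | q.1.1.1 ∈ (Prod.fst ⁻¹' U : Set (X × X))} =>
        HU K h0 h1 (⟨q.1.1, q.2⟩, q.1.2) :=
      (continuous_HU K h0 h1).comp ((Continuous.subtype_mk (by fun_prop) _).prodMk (by fun_prop))
    refine this.congr fun q => ?_
    simp only [Set.domRestrict_apply]
    rw [dif_pos (show q.1.1.1.1.1 ∈ U from q.2)]
  · intro m t hm
    replace hm : m.1.1.1 ∈ U := hm
    simp only
    rw [dif_pos hm]; rfl
  · intro m hm
    replace hm : m.1.1.1 ∈ U := hm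
    simp only
    rw [dif_pos hm, HU_zero]
  · intro m hm
    replace hm : m.1.1.1 ∈ U := hm
    simp only
    rw [dif_pos hm, dif_pos hm, HU_one]

end hspace

lemma pathSec_of_homotopic {X : Type} [TopologicalSpace X] (W : Set (X × X))
    (h : ContinuousMap.Homotopic
      (⟨fun w : W => w.1.1, by fun_prop⟩ : C(W, X)) ⟨fun w : W => w.1.2, by fun_prop⟩) :
    PathSecOn X W := by
  obtain ⟨H⟩ := h
  refine ⟨ContinuousMap.curry ⟨fun q : W × unitInterval => H (q.2, q.1), by fun_prop⟩, ?_⟩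
  intro p
  exact ⟨H.apply_zero p, H.apply_one p⟩

theorem tc_hspace {X : Type} [TopologicalSpace X] (a : C(X × X, X)) (x₀ : X)
    (ha1 : ContinuousMap.Homotopic (⟨fun x => a (x₀, x), by fun_prop⟩ : C(X, X))
      (ContinuousMap.id X))
    (ha2 : ContinuousMap.Homotopic (⟨fun x => a (x, x₀), by fun_prop⟩ : C(X, X))
      (ContinuousMap.id X))
    (k : ℕ) (U C : Fin k → Set X) (lam : Fin k → X → ℝ) (hU : ∀ i, IsOpen (U i))
    (hC : ∀ i, IsClosed (C i)) (hCU : ∀ i, C i ⊆ U i) (hlam : ∀ i, Continuous (lam i))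
    (hl0 : ∀ i x, 0 ≤ lam i x) (hoff : ∀ i x, x ∉ C i → lam i x = 0)
    (hcov : ∀ x, ∃ i, 0 < lam i x)
    (hnull : ∀ i, ContinuousMap.Homotopic
      (⟨fun u : U i => (u : X), continuous_subtype_val⟩ : C(U i, X)) (ContinuousMap.const _ x₀)) :
    TopComplexity X ≤ (k : ℕ∞) := by
  have : Nonempty (MM a) :=
    ⟨⟨((x₀, a (x₀, x₀)), (x₀, ContinuousMap.const _ (a (x₀, x₀)))), rfl, rfl⟩⟩
  have hK : ∀ i, ContinuousMap.Homotopic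
      (⟨fun z : U i × X => a (z.1.1, z.2), by fun_prop⟩ : C(U i × X, X))
      ⟨fun z : U i × X => z.2, by fun_prop⟩ := by
    intro i
    have e1 := ContinuousMap.Homotopic.comp (ContinuousMap.Homotopic.refl a)
      ((hnull i).prodMap (ContinuousMap.Homotopic.refl (ContinuousMap.id X)))
    have e2 := ContinuousMap.Homotopic.comp ha1
      (ContinuousMap.Homotopic.refl (⟨fun z : U i × X => z.2, by fun_prop⟩ : C(U i × X, X)))
    exact e1.trans e2
  have hP : ∀ i, ∃ sj H, PatchData (fun m : MM a => m.1.1) (RR a) (Prod.fst ⁻¹' (U i))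
      (Prod.fst ⁻¹' (C i)) (fun b => lam i b.1) sj H := by
    intro i
    obtain ⟨K⟩ := hK i
    exact exists_patchData K (fun z => rfl) (fun z => rfl) (hU i) (lam i) (hlam i) (hl0 i) (C i)
      (hC i) (hCU i) (hoff i)
  choose sj H hP using hP
  obtain ⟨s, hs, hps⟩ := patch_all (p := fun m : MM a => m.1.1) (continuous_RR a) (fun m => rfl) hP
    (fun b => hcov b.1)
  let D : C(X × X, X) := ⟨fun b => (s b).1.2.1, by fun_prop⟩
  have hD : ContinuousMap.Homotopic (⟨fun b => a (b.1, D b), by fun_prop⟩ : C(X × X, X))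
      ⟨fun b => b.2, by fun_prop⟩ := by
    refine ⟨⟨⟨fun q => (s q.2).1.2.2 q.1, ?_⟩, ?_, ?_⟩⟩
    · have e : Continuous fun q : unitInterval × (X × X) => (s q.2).1.2.2 := by fun_prop
      exact e.eval continuous_fst
    · intro b
      show (s b).1.2.2 0 = a (b.1, D b)
      rw [(s b).2.1]
      have e : (s b).1.1 = b := hps b
      rw [e]; rfl
    · intro b
      show (s b).1.2.2 1 = b.2
      rw [(s b).2.2]
      exact congrArg Prod.snd (hps b)
  refine topComplexity_le k (fun i => D ⁻¹' (U i)) (fun i => (hU i).preimage D.continuous) ?_ ?_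
  · intro b
    obtain ⟨i, hi⟩ := hcov (D b)
    refine ⟨i, hCU i ?_⟩
    by_contra h
    rw [hoff i _ h] at hi
    exact lt_irrefl _ hi
  · intro i
    apply pathSec_of_homotopic
    let W := D ⁻¹' (U i)
    let inc : C(W, X × X) := ⟨Subtype.val, continuous_subtype_val⟩
    let pr1 : C(W, X) := ⟨fun w => w.1.1, by fun_prop⟩
    let DW : C(W, U i) := ⟨fun w => ⟨D w.1, w.2⟩, by fun_prop⟩
    have e1 := ContinuousMap.Homotopic.comp hD (ContinuousMap.Homotopic.refl inc)
    have e2 := ContinuousMap.Homotopic.comp (ContinuousMap.Homotopic.refl a)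
      ((ContinuousMap.Homotopic.refl pr1).prodMk
        ((hnull i).comp (ContinuousMap.Homotopic.refl DW)))
    have e3 := ContinuousMap.Homotopic.comp ha2 (ContinuousMap.Homotopic.refl pr1)
    exact (e3.symm.trans e2.symm).trans e1

lemma pathConnected_RealProj {n : ℕ} (hn : 0 < n) : PathConnectedSpace (RealProj n) := by
  have h : IsPathConnected (Metric.sphere (0 : EE n) 1) :=
    isPathConnected_sphere (by
      rw [rank_eq_card_basis (EuclideanSpace.basisFun (Fin (n + 1)) ℝ).toBasis]
      simp only [Fintype.card_fin]
      exact_mod_cast (by omega : 1 < n + 1)) 0 zero_le_one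
  have : PathConnectedSpace (SS n) := isPathConnected_iff_pathConnectedSpace.1 h
  exact Function.Surjective.pathConnectedSpace piS_surj continuous_piS

/-- basis vector -/
noncomputable def ev {n : ℕ} (i : Fin (n + 1)) : EE n := EuclideanSpace.single i 1

/-- diagonal entry -/
noncomputable def dg {n : ℕ} (i : Fin (n + 1)) (p : RealProj n) : ℝ := (QQ p (ev i)) i

lemma continuous_dg {n : ℕ} (i : Fin (n + 1)) : Continuous (dg i) := by
  have h : Continuous fun p : RealProj n => QQ p (ev i) := continuous_QQ.clm_apply continuous_const
  unfold dg
  fun_prop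

lemma dg_mkE {n : ℕ} (i : Fin (n + 1)) (w : {w : EE n // w ≠ 0}) :
    dg i (mkE w) = (‖w.1‖ ^ 2)⁻¹ * (w.1 i) ^ 2 := by
  rw [dg, QQ_mkE, prj_apply]
  simp [ev, EuclideanSpace.inner_single_right]
  ring

lemma dg_sum {n : ℕ} (p : RealProj n) : ∑ i, dg i p = 1 := by
  obtain ⟨w, rfl⟩ := mkE_surj p
  simp only [dg_mkE]
  rw [← Finset.mul_sum, ← EuclideanSpace.real_norm_sq_eq]
  have : ‖w.1‖ ≠ 0 := norm_ne_zero_iff.2 w.2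
  field_simp

lemma null_chart {n : ℕ} (hn : 0 < n) (x₀ : RealProj n) (i : Fin (n + 1)) :
    ContinuousMap.Homotopic
      (⟨fun u : {p : RealProj n | 0 < dg i p} => (u : RealProj n), continuous_subtype_val⟩ :
        C({p : RealProj n | 0 < dg i p}, RealProj n)) (ContinuousMap.const _ x₀) := by
  have := pathConnected_RealProj hn
  have hev : (ev i : EE n) ≠ 0 := by simp [ev]
  let V : unitInterval × {p : RealProj n | 0 < dg i p} → EE n :=
    fun q => (1 - (q.1 : ℝ)) • QQ q.2.1 (ev i) + (q.1 : ℝ) • ev i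
  have hV : Continuous V := by
    have h : Continuous fun q : unitInterval × {p : RealProj n | 0 < dg i p} => QQ q.2.1 (ev i) :=
      (continuous_QQ.comp (by fun_prop)).clm_apply continuous_const
    fun_prop
  have hV0 : ∀ q, V q ≠ 0 := by
    intro q h
    have e : (1 - (q.1 : ℝ)) * dg i q.2.1 + q.1 = 0 := by
      have := congrArg (fun v : EE n => v i) h
      simpa [V, dg, ev] using this
    have e1 := q.1.2.1
    have e2 := q.1.2.2
    have e3 : 0 < dg i q.2.1 := q.2.2
    rcases e1.lt_or_eq with h4 | h4
    · nlinarith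
    · rw [← h4] at e; simp at e; linarith
  have s1 : ContinuousMap.Homotopic
      (⟨fun u : {p : RealProj n | 0 < dg i p} => (u : RealProj n), continuous_subtype_val⟩ :
        C({p : RealProj n | 0 < dg i p}, RealProj n)) (ContinuousMap.const _ (mkE ⟨ev i, hev⟩)) := by
    refine ⟨⟨⟨fun q => mkE ⟨V q, hV0 q⟩, (continuous_mkE n).comp (hV.subtype_mk _)⟩, ?_, ?_⟩⟩
    · rintro ⟨p, hp⟩
      show mkE ⟨V (0, ⟨p, hp⟩), _⟩ = p
      obtain ⟨w, rfl⟩ := mkE_surj p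
      have e : V (0, ⟨mkE w, hp⟩) = ((‖w.1‖ ^ 2)⁻¹ * inner ℝ w.1 (ev i)) • w.1 := by
        simp [V, QQ_mkE, prj_apply]
      refine (mkE_eq_of_smul _ _ ((‖w.1‖ ^ 2)⁻¹ * inner ℝ w.1 (ev i)) ?_ e.symm).symm
      intro h0
      apply hV0 (0, ⟨mkE w, hp⟩)
      rw [e, h0, zero_smul]
    · intro u
      show mkE ⟨V (1, u), _⟩ = _
      have e : V (1, u) = ev i := by simp [V]
      simp only [e]; rfl
  refine s1.trans ?_
  let γ := PathConnectedSpace.somePath (mkE ⟨ev i, hev⟩) x₀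
  exact ⟨⟨⟨fun q => γ q.1, by fun_prop⟩, fun u => γ.source, fun u => γ.target⟩⟩

lemma homotopic_of_fn {X Y : Type} [TopologicalSpace X] [TopologicalSpace Y] (f g : C(X, Y))
    (h : FnHomotopic f g) : ContinuousMap.Homotopic f g := by
  obtain ⟨H, hH, h0, h1⟩ := h
  exact ⟨⟨⟨fun q => H (q.2, q.1), by fun_prop⟩, h0, h1⟩⟩

lemma projIncl_self {n : ℕ} (h : n ≤ n) (x : RealProj n) : projIncl n n h x = x := by
  induction x using Quot.ind with
  | mk v =>
    refine congrArg (Quot.mk _) (Subtype.ext ?_)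
    funext j
    have hj : (j : ℕ) < n + 1 := j.2
    simp only [extVec, dif_pos hj]

theorem tc_eq_case {n : ℕ} (hn : 0 < n) (hnr : n ≤ n)
    (a : RealProj n × RealProj n → RealProj n) (ha : Continuous a) (x₀ : RealProj n)
    (h1 : FnHomotopic (fun x => a (x₀, x)) (projIncl n n hnr))
    (h2 : FnHomotopic (fun x => a (x, x₀)) (projIncl n n hnr)) :
    TopComplexity (RealProj n) ≤ ((n + 1 : ℕ) : ℕ∞) := by
  have hid : projIncl n n hnr = id := funext (projIncl_self hnr)
  rw [hid] at h1 h2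
  have hnp : (0 : ℝ) < 1 / (n + 2) := by positivity
  refine tc_hspace ⟨a, ha⟩ x₀ (homotopic_of_fn _ _ h1) (homotopic_of_fn _ _ h2) (n + 1)
    (fun i => {p | 0 < dg i p}) (fun i => {p | 1 / ((n : ℝ) + 2) ≤ dg i p})
    (fun i p => max 0 (dg i p - 1 / ((n : ℝ) + 2)))
    (fun i => isOpen_lt continuous_const (continuous_dg i))
    (fun i => isClosed_le continuous_const (continuous_dg i))
    (fun i p hp => lt_of_lt_of_le hnp hp)
    (fun i => continuous_const.max ((continuous_dg i).sub continuous_const))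
    (fun i p => le_max_left _ _) ?_ ?_ (fun i => null_chart hn x₀ i)
  · intro i p hp
    have : dg i p < 1 / ((n : ℝ) + 2) := not_le.1 hp
    exact max_eq_left (by linarith)
  · intro p
    by_contra! h
    have hle : ∀ i, dg i p ≤ 1 / ((n : ℝ) + 2) := fun i => by
      have := (le_max_right _ _).trans (h i)
      linarith
    have := Finset.sum_le_sum (s := Finset.univ) fun i _ => hle i
    rw [dg_sum] at this
    simp at this
    rw [← div_eq_mul_inv, le_div_iff₀ (by positivity)] at this
    linarith

/-- If `n ≤ r` are positive and there is an axial map `a : Pⁿ × Pⁿ → P^r` (its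
restrictions to the two factors are homotopic to the standard inclusion `Pⁿ ↪ P^r`),
then `TC(Pⁿ) ≤ r + 1`. -/
theorem topComplexity_realProj_le_of_axial (n r : ℕ) (hn : 0 < n) (hnr : n ≤ r)
    (a : RealProj n × RealProj n → RealProj r) (ha : Continuous a)
    (haxial : ∃ x₀ : RealProj n,
      FnHomotopic (fun x => a (x₀, x)) (projIncl n r hnr) ∧
      FnHomotopic (fun x => a (x, x₀)) (projIncl n r hnr)) :
    TopComplexity (RealProj n) ≤ ((r + 1 : ℕ) : ℕ∞) := by
  obtain ⟨x₀, h1, h2⟩ := haxial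
  rcases hnr.lt_or_eq with h | h
  · obtain ⟨F, hF, hF1, hF2, hF3⟩ := exists_biodd hn hnr a ha x₀ h1 h2
    exact tc_of_biodd_lt h F hF hF1 hF2 hF3
  · subst h
    exact tc_eq_case hn hnr a ha x₀ h1 h2
end
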